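/- arXiv:0801.0077 — 5 statements merged into one kernel-verified Lean document; each statement's English description precedes it below -/
import Mathlib

section
/- Let n ≥ 2 and 2 ≤ k ≤ n be integers, let C ⊆ EuclideanSpace ℝ n be a closed convex set with closedBall(0, r₀) ⊆ C, and let 0 < r₀ < r₁ < r. Set α = α_{r₀}(r, r₁). If vol(C) < κ_n · r₁^n · (∫₀^α (sin t)^(k−2) dt) / (∫₀^π (sin t)^(k−2) dt), then there exists a k-dimensional linear subspace Π of EuclideanSpace ℝ n with C ∩ Π ⊆ ball(0, r). -/
open Metric MeasureTheory

/-!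
Suppose that every `k`-plane contains a point of `C` outside the open ball of radius `r`. As `C` is
convex and contains the origin, every `k`-plane then contains a point `x ∈ C` with `‖x‖ = r`.

The convex hull of `x` and the `r₀`-ball contains all vectors of norm `r₁` at angle at most
`α_{r₀}(r, r₁)` from `x` (`smul_mem_of_cap`): this angle is `arccos (r₀ / r) - arccos (r₀ / r₁)`, the
angle between `x` and the point of norm `r₁` on a tangent segment from `x` to the ball. Let `K` be
the cone of vectors `v` such that `(r₁ / ‖v‖) • v ∈ C`. Then `K` contains, inside each `k`-plane, a
sector of half-angle `α_{r₀}(r, r₁)`, whose share of the volume of a ball of `ℝᵏ` is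
`(∫₀^α sin^(k-2)) / (∫₀^π sin^(k-2))` (`volume_sector`).

Averaging over all rotations of a fixed `k`-plane with Haar measure on the orthogonal group shows
that `K` fills at least the same share of a ball in `ℝⁿ`: by transitivity on spheres, the probability
that a random rotation moves `v ≠ 0` into `K` does not depend on `v`, and by Fubini it equals the
mean share of `K` both in a `k`-plane and in `ℝⁿ` (`orbit_measure_mul_volume_ball`). Since
`K ∩ ball 0 r₁ ⊆ C`, this bounds the volume of `C` from below, contradicting the hypothesis.
-/

/-- The angle `α_{r₀}(r₁, r₂)` of the paper's Definition 1.2 (scale-invariant form). -/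
noncomputable def alphaAngle (r₀ r₁ r₂ : ℝ) : ℝ :=
  Real.arcsin (r₀ * (Real.sqrt (r₁ ^ 2 - r₀ ^ 2) - Real.sqrt (r₂ ^ 2 - r₀ ^ 2)) / (r₁ * r₂))

/-- `κ_m`: the volume of the unit ball in `ℝ^m`. -/
noncomputable def kappa (m : ℕ) : ℝ := Real.pi ^ ((m : ℝ) / 2) / Real.Gamma ((m : ℝ) / 2 + 1)

/-! ### Averaging over rotations -/

/-- Haar measure on the orthogonal group, presented as a finite nonzero measure on a family of
isometries `T g` for which the law of `T g v` does not change when `v` is rotated. Taking `T g` to be the action of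
`g⁻¹` makes left invariance of Haar measure sufficient. -/
lemma exists_rotation_measure (E : Type) [NormedAddCommGroup E] [InnerProductSpace ℝ E]
    [FiniteDimensional ℝ E] [MeasurableSpace E] [BorelSpace E] :
    ∃ (G : Type) (_ : MeasurableSpace G) (μ : Measure G) (T : G → E ≃ₗᵢ[ℝ] E),
      IsFiniteMeasure μ ∧ μ Set.univ ≠ 0 ∧ Measurable (fun p : G × E => T p.1 p.2) ∧
      ∀ (f : E ≃ₗᵢ[ℝ] E) (K : Set E) (v : E), μ {g | T g (f v) ∈ K} = μ {g | T g v ∈ K} := by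
  let G := unitary (E →L[ℝ] E)
  let _ : MeasurableSpace G := borel G
  have _ : BorelSpace G := ⟨rfl⟩
  have _ : ProperSpace (E →L[ℝ] E) := FiniteDimensional.proper ℝ _
  have _ : CompactSpace G := by
    refine isCompact_iff_compactSpace.mp
      (Metric.isCompact_of_isClosed_isBounded (isClosed_unitary (R := E →L[ℝ] E)) ?_)
    refine (Metric.isBounded_closedBall (x := (0 : E →L[ℝ] E)) (r := 1)).subset fun g hg => ?_
    rw [mem_closedBall_zero_iff]
    refine ContinuousLinearMap.opNorm_le_bound _ zero_le_one fun x => ?_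
    rw [one_mul]
    exact (Unitary.norm_map ⟨g, hg⟩ x).le
  refine ⟨G, inferInstance, Measure.haar, fun g => Unitary.linearIsometryEquiv g⁻¹,
    inferInstance, ?_, ?_, ?_⟩
  · exact (IsOpen.measure_pos _ isOpen_univ Set.univ_nonempty).ne'
  · apply Continuous.measurable
    change Continuous fun p : G × E => ((p.1⁻¹ : G) : E →L[ℝ] E) p.2
    fun_prop
  · intro f K v
    let h : G := Unitary.linearIsometryEquiv.symm f
    have hf : f = Unitary.linearIsometryEquiv h := by simp [h]
    rw [← measure_preimage_mul Measure.haar h⁻¹ {g : G | Unitary.linearIsometryEquiv g⁻¹ v ∈ K}]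
    congr 1
    ext g
    simp only [hf, map_mul, mul_inv_rev, inv_inv, Set.mem_ofPred_eq, Set.mem_preimage]
    rfl

section Avg
variable {n : ℕ} {G : Type} [MeasurableSpace G] {μ : Measure G}
  {T : G → EuclideanSpace ℝ (Fin n) ≃ₗᵢ[ℝ] EuclideanSpace ℝ (Fin n)}
  {K : Set (EuclideanSpace ℝ (Fin n))}

/-- If `K` is a cone, the measure of the rotations taking `v` into `K` is the same for all
`v ≠ 0`, since the isometries act transitively on spheres. -/
lemma orbit_measure_eq
    (hinv : ∀ (f : EuclideanSpace ℝ (Fin n) ≃ₗᵢ[ℝ] EuclideanSpace ℝ (Fin n))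
        (K : Set (EuclideanSpace ℝ (Fin n))) (v : EuclideanSpace ℝ (Fin n)),
        μ {g | T g (f v) ∈ K} = μ {g | T g v ∈ K})
    (hcone : ∀ c : ℝ, 0 < c → ∀ v, c • v ∈ K ↔ v ∈ K)
    {v w : EuclideanSpace ℝ (Fin n)} (hv : v ≠ 0) (hw : w ≠ 0) :
    μ {g | T g v ∈ K} = μ {g | T g w ∈ K} := by
  have hv' := norm_pos_iff.mpr hv
  have hw' := norm_pos_iff.mpr hw
  have hc : 0 < ‖w‖ / ‖v‖ := by positivity
  have hnorm : ‖(‖w‖ / ‖v‖) • v‖ = ‖w‖ := by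
    rw [norm_smul, Real.norm_of_nonneg hc.le]; field_simp
  rw [← Submodule.reflection_sub hnorm, hinv]
  congr 1
  ext g
  simp only [map_smul, Set.mem_ofPred_eq]
  exact (hcone _ hc _).symm

/-- Fubini on `G × F`: the fraction of a ball taken into the cone `K`, averaged over all rotations,
does not depend on the space `F ⊆ ℝⁿ` in which the ball is taken. -/
lemma orbit_measure_mul_volume_ball [IsFiniteMeasure μ]
    {F : Type} [NormedAddCommGroup F] [InnerProductSpace ℝ F] [FiniteDimensional ℝ F]
    [MeasurableSpace F] [BorelSpace F] [Nontrivial F]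
    (hT : Measurable (fun p : G × EuclideanSpace ℝ (Fin n) => T p.1 p.2))
    (hinv : ∀ (f : EuclideanSpace ℝ (Fin n) ≃ₗᵢ[ℝ] EuclideanSpace ℝ (Fin n))
        (K : Set (EuclideanSpace ℝ (Fin n))) (v : EuclideanSpace ℝ (Fin n)),
        μ {g | T g (f v) ∈ K} = μ {g | T g v ∈ K})
    (hcone : ∀ c : ℝ, 0 < c → ∀ v, c • v ∈ K ↔ v ∈ K) (hK : MeasurableSet K)
    (ι : F →ₗᵢ[ℝ] EuclideanSpace ℝ (Fin n)) (R : ℝ)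
    {e : EuclideanSpace ℝ (Fin n)} (he : e ≠ 0) :
    μ {g | T g e ∈ K} * volume (ball (0 : F) R) =
      ∫⁻ g, volume ({w : F | T g (ι w) ∈ K} ∩ ball 0 R) ∂μ := by
  have hS : MeasurableSet {p : G × F | T p.1 (ι p.2) ∈ K} :=
    (hT.comp (measurable_fst.prodMk (ι.continuous.measurable.comp measurable_snd))) hK
  have h1 := Measure.prod_apply (μ := μ) (ν := volume.restrict (ball (0 : F) R)) hS
  have h2 := Measure.prod_apply_symm (μ := μ) (ν := volume.restrict (ball (0 : F) R)) hS
  have h3 : ∀ g : G, volume ({w : F | T g (ι w) ∈ K} ∩ ball 0 R) =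
      volume.restrict (ball (0 : F) R) (Prod.mk g ⁻¹' {p : G × F | T p.1 (ι p.2) ∈ K}) :=
    fun g => (Measure.restrict_apply (measurable_prodMk_left hS)).symm
  simp_rw [h3]
  rw [← h1, h2]
  have h4 : ∀ᵐ w ∂(volume.restrict (ball (0 : F) R)),
      μ ((fun x => (x, w)) ⁻¹' {p : G × F | T p.1 (ι p.2) ∈ K}) = μ {g | T g e ∈ K} := by
    refine ae_restrict_of_ae ?_
    filter_upwards [Measure.ae_ne volume (0 : F)] with w hw
    exact orbit_measure_eq hinv hcone (fun h => hw (ι.injective (by simpa using h))) he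
  rw [lintegral_congr_ae h4, lintegral_const, Measure.restrict_apply_univ]
end Avg

/-! ### Volume of a spherical sector -/

/-- Integration of a radial function in polar coordinates, `lintegral` version of
`MeasureTheory.integral_fun_norm_addHaar`. -/
lemma lintegral_fun_norm_eq {W : Type} [NormedAddCommGroup W] [InnerProductSpace ℝ W]
    [FiniteDimensional ℝ W] [MeasurableSpace W] [BorelSpace W] [Nontrivial W]
    {f : ℝ → ENNReal} (hf : Measurable f) :
    ∫⁻ x : W, f ‖x‖ = (volume : Measure W).toSphere Set.univ *
      ∫⁻ y in Set.Ioi (0 : ℝ), ENNReal.ofReal (y ^ (Module.finrank ℝ W - 1)) * f y := by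
  have hm : Measurable fun x : Set.Ioi (0 : ℝ) => f x := hf.comp measurable_subtype_coe
  calc ∫⁻ x : W, f ‖x‖
      = ∫⁻ x : ({(0)}ᶜ : Set W), f (‖x.1‖) ∂((volume : Measure W).comap (↑)) := by
        rw [lintegral_subtype_comap (measurableSet_singleton _).compl fun x : W ↦ f (‖x‖),
          restrict_compl_singleton]
    _ = ∫⁻ x, f x.2 ∂(volume : Measure W).toSphere.prod
          (.volumeIoiPow (Module.finrank ℝ W - 1)) := by
        simpa using
          (volume : Measure W).measurePreserving_homeomorphUnitSphereProd.lintegral_comp_emb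
            (Homeomorph.measurableEmbedding _) (f ∘ Subtype.val ∘ Prod.snd)
    _ = _ := by
        have := lintegral_prod_mul (μ := (volume : Measure W).toSphere)
          (ν := .volumeIoiPow (Module.finrank ℝ W - 1)) (f := fun _ => 1)
          (g := fun x : Set.Ioi (0 : ℝ) => f x) aemeasurable_const hm.aemeasurable
        simp only [one_mul, lintegral_one] at this
        rw [this, Measure.volumeIoiPow, lintegral_withDensity_eq_lintegral_mul _ (by fun_prop) hm]
        congr 1
        exact lintegral_subtype_comap measurableSet_Ioi
          fun y : ℝ => ENNReal.ofReal (y ^ (Module.finrank ℝ W - 1)) * f y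

/-- The planar profile of the sector of radius `R` and half-angle `α` about the first axis of
`ℝ × W`: the vector `v = (s, y)` lies in that sector iff `(s, ‖y‖) ∈ cap α R`. The second condition says `‖v‖ cos α ≤ s`, i.e. the angle to the axis is at
most `α`. -/
noncomputable def cap (α R : ℝ) : Set (ℝ × ℝ) :=
  {p | √(p.1 ^ 2 + p.2 ^ 2) < R ∧ √(p.1 ^ 2 + p.2 ^ 2) * Real.cos α ≤ p.1}

lemma measurableSet_cap (α R : ℝ) : MeasurableSet (cap α R) := by
  have h1 : MeasurableSet {p : ℝ × ℝ | √(p.1 ^ 2 + p.2 ^ 2) < R} :=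
    measurableSet_lt (by fun_prop) (by fun_prop)
  have h2 : MeasurableSet {p : ℝ × ℝ | √(p.1 ^ 2 + p.2 ^ 2) * Real.cos α ≤ p.1} :=
    measurableSet_le (by fun_prop) (by fun_prop)
  exact h1.inter h2

/-- In planar polar coordinates `(s, θ)` the sector is `s < R`, `0 < θ ≤ α`, and the weight `y ^ j`
coming from the radial direction of `W` turns into `s ^ j * sin θ ^ j`, so the variables separate. -/
lemma lintegral_cap (α R : ℝ) (hα : 0 ≤ α) (hαπ : α ≤ Real.pi) (j : ℕ) :
    ∫⁻ p : ℝ × ℝ, (Set.Ioi (0 : ℝ)).indicator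
        (fun y => ENNReal.ofReal (y ^ j) * (cap α R).indicator 1 (p.1, y)) p.2 =
      (∫⁻ s in Set.Ioi (0 : ℝ), (Set.Iio R).indicator (fun s => ENNReal.ofReal (s ^ (j + 1))) s) *
      ∫⁻ θ in Set.Ioc 0 α, ENNReal.ofReal (Real.sin θ ^ j) := by
  rw [← lintegral_comp_polarCoord_symm]
  have hpt : ∀ p ∈ polarCoord.target, ENNReal.ofReal p.1 • (Set.Ioi (0 : ℝ)).indicator
        (fun y => ENNReal.ofReal (y ^ j) * (cap α R).indicator 1 ((polarCoord.symm p).1, y))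
          (polarCoord.symm p).2 =
      (Set.Iio R).indicator (fun s => ENNReal.ofReal (s ^ (j + 1))) p.1 *
        (Set.Ioc 0 α).indicator (fun θ => ENNReal.ofReal (Real.sin θ ^ j)) p.2 := by
    rintro ⟨s, θ⟩ ⟨hs, hθ⟩
    simp only [Set.mem_Ioi, Set.mem_Ioo] at hs hθ
    simp only [polarCoord_symm_apply]
    by_cases hθ0 : 0 < θ
    · have hsin : 0 < Real.sin θ := Real.sin_pos_of_pos_of_lt_pi hθ0 hθ.2
      have hy : 0 < s * Real.sin θ := mul_pos hs hsin
      have hsq : √((s * Real.cos θ) ^ 2 + (s * Real.sin θ) ^ 2) = s := by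
        rw [show (s * Real.cos θ) ^ 2 + (s * Real.sin θ) ^ 2 = s ^ 2 by
          linear_combination s ^ 2 * Real.cos_sq_add_sin_sq θ, Real.sqrt_sq hs.le]
      have hmem : ((s * Real.cos θ, s * Real.sin θ) ∈ cap α R) ↔ s < R ∧ θ ≤ α := by
        simp only [cap, Set.mem_ofPred_eq, hsq]
        refine and_congr_right fun _ => ?_
        rw [mul_le_mul_iff_right₀ hs]
        exact Real.strictAntiOn_cos.le_iff_ge ⟨hα, hαπ⟩ ⟨hθ0.le, hθ.2.le⟩
      rw [Set.indicator_of_mem (by exact hy)]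
      by_cases h1 : s < R <;> by_cases h2 : θ ≤ α
      · rw [Set.indicator_of_mem (hmem.2 ⟨h1, h2⟩), Set.indicator_of_mem (by exact h1),
          Set.indicator_of_mem (by exact ⟨hθ0, h2⟩), smul_eq_mul, Pi.one_apply, mul_one,
          ← ENNReal.ofReal_mul hs.le, ← ENNReal.ofReal_mul (by positivity)]
        congr 1; ring
      all_goals simp [Set.indicator, hmem, h1, h2]
    · have hsin : Real.sin θ ≤ 0 := Real.sin_nonpos_of_nonpos_of_neg_pi_le (not_lt.1 hθ0) hθ.1.le
      have hy : ¬ 0 < s * Real.sin θ := not_lt.2 (mul_nonpos_of_nonneg_of_nonpos hs.le hsin)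
      simp [Set.indicator, hy, hθ0]
  rw [setLIntegral_congr_fun polarCoord.open_target.measurableSet hpt, polarCoord_target,
    Measure.volume_eq_prod, ← Measure.prod_restrict, lintegral_prod_mul]
  · congr 1
    rw [lintegral_indicator measurableSet_Ioc, Measure.restrict_restrict measurableSet_Ioc]
    refine setLIntegral_congr ?_
    -- for `α = π` the two sets differ by the point `π`
    refine ((ae_eq_refl (Set.Ioc 0 α)).inter Ioo_ae_eq_Ioc).trans (Filter.EventuallyEq.of_eq ?_)
    exact Set.inter_eq_left.2 (Set.Ioc_subset_Ioc (by linarith [Real.pi_pos]) hαπ)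
  · exact ((measurable_id.pow_const _).ennreal_ofReal.indicator measurableSet_Iio).aemeasurable
  · exact ((Real.measurable_sin.pow_const _).ennreal_ofReal.indicator
      measurableSet_Ioc).aemeasurable

/-- The volume of the sector of half-angle `α` in dimension `m + 1` is proportional to
`∫₀^α sin^(m-1)`. The constant is left unspecified: `α = π` gives the ball, so it cancels in
ratios. -/
lemma volume_sector (m : ℕ) (hm : 1 ≤ m) (R : ℝ) : ∃ A : ENNReal, ∀ α, 0 ≤ α → α ≤ Real.pi →
    volume {v : WithLp 2 (ℝ × EuclideanSpace ℝ (Fin m)) | ‖v‖ < R ∧ ‖v‖ * Real.cos α ≤ v.fst} =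
      A * ∫⁻ θ in Set.Ioc 0 α, ENNReal.ofReal (Real.sin θ ^ (m - 1)) := by
  have _ : NeZero m := ⟨by omega⟩
  refine ⟨(volume : Measure (EuclideanSpace ℝ (Fin m))).toSphere Set.univ *
    ∫⁻ s in Set.Ioi (0 : ℝ), (Set.Iio R).indicator (fun s => ENNReal.ofReal (s ^ (m - 1 + 1))) s,
    fun α hα hαπ => ?_⟩
  have hcap := measurableSet_cap α R
  have hS : {v : WithLp 2 (ℝ × EuclideanSpace ℝ (Fin m)) | ‖v‖ < R ∧ ‖v‖ * Real.cos α ≤ v.fst} =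
      WithLp.ofLp ⁻¹' {p : ℝ × EuclideanSpace ℝ (Fin m) | (p.1, ‖p.2‖) ∈ cap α R} := by
    ext v
    simp [cap, WithLp.prod_norm_eq_of_L2]
  have hmeas : MeasurableSet {p : ℝ × EuclideanSpace ℝ (Fin m) | (p.1, ‖p.2‖) ∈ cap α R} :=
    (measurable_fst.prodMk measurable_snd.norm) hcap
  rw [hS, (WithLp.volume_preserving_ofLp _ _).measure_preimage hmeas.nullMeasurableSet,
    Measure.volume_eq_prod, Measure.prod_apply hmeas]
  have hslice : ∀ x : ℝ, volume (Prod.mk x ⁻¹'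
      {p : ℝ × EuclideanSpace ℝ (Fin m) | (p.1, ‖p.2‖) ∈ cap α R}) =
      (volume : Measure (EuclideanSpace ℝ (Fin m))).toSphere Set.univ *
      ∫⁻ y, (Set.Ioi (0 : ℝ)).indicator
        (fun y => ENNReal.ofReal (y ^ (m - 1)) * (cap α R).indicator 1 (x, y)) y := by
    intro x
    have hf : Measurable fun y : ℝ => (cap α R).indicator (1 : ℝ × ℝ → ENNReal) (x, y) :=
      (measurable_one.indicator hcap).comp measurable_prodMk_left
    have := lintegral_fun_norm_eq (W := EuclideanSpace ℝ (Fin m)) hf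
    rw [finrank_euclideanSpace_fin] at this
    rw [lintegral_indicator measurableSet_Ioi, ← this,
      ← lintegral_indicator_one (measurable_prodMk_left hmeas)]
    rfl
  have hmeas2 : Measurable fun p : ℝ × ℝ => (Set.Ioi (0 : ℝ)).indicator
        (fun y => ENNReal.ofReal (y ^ (m - 1)) * (cap α R).indicator 1 (p.1, y)) p.2 := by
    have : (fun p : ℝ × ℝ => (Set.Ioi (0 : ℝ)).indicator
        (fun y => ENNReal.ofReal (y ^ (m - 1)) * (cap α R).indicator 1 (p.1, y)) p.2) =
        (Prod.snd ⁻¹' Set.Ioi (0 : ℝ)).indicator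
          (fun p : ℝ × ℝ => ENNReal.ofReal (p.2 ^ (m - 1)) * (cap α R).indicator 1 p) := rfl
    rw [this]
    exact (Measurable.mul (by fun_prop) (measurable_one.indicator hcap)).indicator
      (measurable_snd measurableSet_Ioi)
  simp_rw [hslice]
  rw [lintegral_const_mul _ hmeas2.lintegral_prod_right', mul_assoc,
    ← lintegral_cap α R hα hαπ, Measure.volume_eq_prod,
    lintegral_prod _ hmeas2.aemeasurable]

lemma norm_axis (m : ℕ) {r : ℝ} (hr : 0 < r) :
    ‖(WithLp.toLp 2 (r, 0) : WithLp 2 (ℝ × EuclideanSpace ℝ (Fin m)))‖ = r := by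
  simp [abs_of_pos hr]

lemma inner_axis (m : ℕ) (r : ℝ) (v : WithLp 2 (ℝ × EuclideanSpace ℝ (Fin m))) :
    inner ℝ v (WithLp.toLp 2 (r, 0)) = r * v.fst := by
  simp [WithLp.prod_inner_apply]

lemma abs_fst_le_norm (m : ℕ) (v : WithLp 2 (ℝ × EuclideanSpace ℝ (Fin m))) :
    |v.fst| ≤ ‖v‖ := by
  rw [WithLp.prod_norm_eq_of_L2, Real.norm_eq_abs]
  exact Real.le_sqrt_of_sq_le (by nlinarith [sq_nonneg ‖v.snd‖])

/-! ### The cap contained in the convex hull of a ball and a point -/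

lemma cos_alphaAngle {r₀ r₁ r : ℝ} (h₀ : 0 < r₀) (h₁ : r₀ < r₁) (h₂ : r₁ < r) :
    r * r₁ * Real.cos (alphaAngle r₀ r r₁) =
      r₀ ^ 2 + √(r ^ 2 - r₀ ^ 2) * √(r₁ ^ 2 - r₀ ^ 2) := by
  have ha : √(r ^ 2 - r₀ ^ 2) ^ 2 = r ^ 2 - r₀ ^ 2 := Real.sq_sqrt (by nlinarith)
  have hb : √(r₁ ^ 2 - r₀ ^ 2) ^ 2 = r₁ ^ 2 - r₀ ^ 2 := Real.sq_sqrt (by nlinarith)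
  have hr₁ : 0 < r₁ := h₀.trans h₁
  have hr : 0 < r := hr₁.trans h₂
  rw [alphaAngle, Real.cos_arcsin]
  set a := √(r ^ 2 - r₀ ^ 2)
  set b := √(r₁ ^ 2 - r₀ ^ 2)
  have ha0 : 0 ≤ a := Real.sqrt_nonneg _
  have hb0 : 0 ≤ b := Real.sqrt_nonneg _
  have : 1 - (r₀ * (a - b) / (r * r₁)) ^ 2 = ((r₀ ^ 2 + a * b) / (r * r₁)) ^ 2 := by
    field_simp
    have e1 : r ^ 2 = a ^ 2 + r₀ ^ 2 := by linarith
    have e2 : r₁ ^ 2 = b ^ 2 + r₀ ^ 2 := by linarith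
    rw [e1, e2]; ring
  rw [this, Real.sqrt_sq (by positivity)]
  field_simp

lemma alphaAngle_mem {r₀ r₁ r : ℝ} (h₀ : 0 < r₀) (h₁ : r₀ < r₁) (h₂ : r₁ < r) :
    0 ≤ alphaAngle r₀ r r₁ ∧ alphaAngle r₀ r r₁ ≤ Real.pi := by
  constructor
  · have : √(r₁ ^ 2 - r₀ ^ 2) ≤ √(r ^ 2 - r₀ ^ 2) := Real.sqrt_le_sqrt (by nlinarith)
    refine Real.arcsin_nonneg.2 (div_nonneg (mul_nonneg h₀.le (by linarith)) ?_)
    have := h₀.trans h₁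
    have := this.trans h₂
    positivity
  · exact (Real.arcsin_le_pi_div_two _).trans (by linarith [Real.pi_pos])

/-- If `C` is convex and contains the ball of radius `r₀` and a point `x` of norm `r`, it contains
every vector of norm `r₁` whose angle to `x` is at most `α_{r₀}(r, r₁)`. -/
lemma smul_mem_of_cap {E : Type} [NormedAddCommGroup E] [InnerProductSpace ℝ E] {C : Set E}
    (hC : Convex ℝ C) {r₀ r₁ r : ℝ} (h₀ : 0 < r₀) (h₁ : r₀ < r₁) (h₂ : r₁ < r)
    (hball : closedBall (0 : E) r₀ ⊆ C) {x u : E} (hx : x ∈ C) (hxr : ‖x‖ = r) (hu : ‖u‖ = 1)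
    (hang : r * Real.cos (alphaAngle r₀ r r₁) ≤ inner ℝ u x) : r₁ • u ∈ C := by
  have hcos := cos_alphaAngle h₀ h₁ h₂
  have ha : √(r ^ 2 - r₀ ^ 2) ^ 2 = r ^ 2 - r₀ ^ 2 := Real.sq_sqrt (by nlinarith)
  have hb : √(r₁ ^ 2 - r₀ ^ 2) ^ 2 = r₁ ^ 2 - r₀ ^ 2 := Real.sq_sqrt (by nlinarith)
  have ha0 : 0 < √(r ^ 2 - r₀ ^ 2) := Real.sqrt_pos.2 (by nlinarith)
  have hab : √(r₁ ^ 2 - r₀ ^ 2) < √(r ^ 2 - r₀ ^ 2) :=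
    Real.sqrt_lt_sqrt (by nlinarith) (by nlinarith)
  have hb0 : 0 ≤ √(r₁ ^ 2 - r₀ ^ 2) := Real.sqrt_nonneg _
  set a := √(r ^ 2 - r₀ ^ 2)
  set b := √(r₁ ^ 2 - r₀ ^ 2)
  have hr₁ : 0 < r₁ := h₀.trans h₁
  -- A tangent segment from `x` to the `r₀`-ball has length `a`, and its point of norm `r₁` is at
  -- distance `b` from the tangency point; hence the weight `b / a` on `x`.
  obtain ⟨t, ht⟩ : ∃ t, t = b / a := ⟨_, rfl⟩
  have hta : t * a = b := by rw [ht]; field_simp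
  have ht0 : 0 ≤ t := ht ▸ div_nonneg hb0 ha0.le
  have ht1 : t < 1 := ht ▸ (div_lt_one ha0).2 hab
  have ht1' : 0 < 1 - t := by linarith
  have hnorm : ‖r₁ • u - t • x‖ ≤ (1 - t) * r₀ := by
    refine le_of_sq_le_sq ?_ (by positivity)
    rw [@norm_sub_sq_real, norm_smul, norm_smul, real_inner_smul_left, real_inner_smul_right, hu,
      hxr, mul_one, Real.norm_of_nonneg hr₁.le, Real.norm_of_nonneg ht0]
    have h5 : t * (r₁ * (r * Real.cos (alphaAngle r₀ r r₁))) ≤ t * (r₁ * inner ℝ u x) := by gcongr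
    have h6 : t * (r₁ * (r * Real.cos (alphaAngle r₀ r r₁))) = t * r₀ ^ 2 + b ^ 2 := by
      rw [← hta] at hcos ⊢; linear_combination t * hcos
    have h7 : (t * r) ^ 2 = b ^ 2 + t ^ 2 * r₀ ^ 2 := by
      rw [← hta]; linear_combination (-t ^ 2) * ha
    nlinarith
  have hmem : (1 - t)⁻¹ • (r₁ • u - t • x) ∈ C := by
    refine hball ?_
    rw [mem_closedBall_zero_iff, norm_smul, Real.norm_of_nonneg (by positivity),
      inv_mul_le_iff₀ ht1']
    exact hnorm
  have := hC hmem hx ht1'.le ht0 (by ring)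
  rwa [smul_inv_smul₀ ht1'.ne', sub_add_cancel] at this

/-! ### Comparison of volumes -/

/-- A reflection exchanges the sectors about two axes of equal length. -/
lemma volume_sector_axis {F : Type} [NormedAddCommGroup F] [InnerProductSpace ℝ F]
    [FiniteDimensional ℝ F] [MeasurableSpace F] [BorelSpace F] (R c : ℝ) {x y : F}
    (h : ‖x‖ = ‖y‖) :
    volume {v : F | ‖v‖ < R ∧ ‖v‖ * c ≤ inner ℝ v x} =
      volume {v : F | ‖v‖ < R ∧ ‖v‖ * c ≤ inner ℝ v y} := by
  let f := (Submodule.span ℝ {x - y})ᗮ.reflection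
  have hf : f y = x := by rw [← Submodule.reflection_sub h, Submodule.reflection_reflection]
  have hs : MeasurableSet {v : F | ‖v‖ < R ∧ ‖v‖ * c ≤ inner ℝ v x} := by
    have h1 : MeasurableSet {v : F | ‖v‖ < R} := measurableSet_lt (by fun_prop) (by fun_prop)
    have h2 : MeasurableSet {v : F | ‖v‖ * c ≤ inner ℝ v x} :=
      measurableSet_le (by fun_prop) (by fun_prop)
    exact h1.inter h2
  rw [← f.measurePreserving.measure_preimage hs.nullMeasurableSet]
  congr 1
  ext v
  simp only [Set.mem_preimage, Set.mem_ofPred_eq, f.norm_map]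
  rw [← hf, f.inner_map_map]

lemma ofReal_integral_sin_pow (j : ℕ) {α : ℝ} (h0 : 0 ≤ α) (hπ : α ≤ Real.pi) :
    ∫⁻ θ in Set.Ioc 0 α, ENNReal.ofReal (Real.sin θ ^ j) =
      ENNReal.ofReal (∫ θ in (0 : ℝ)..α, Real.sin θ ^ j) := by
  rw [intervalIntegral.integral_of_le h0, ofReal_integral_eq_lintegral_ofReal]
  · exact ((Real.continuous_sin.pow j).intervalIntegrable 0 α).1
  · filter_upwards [ae_restrict_mem measurableSet_Ioc] with θ hθ
    exact pow_nonneg (Real.sin_nonneg_of_nonneg_of_le_pi hθ.1.le (hθ.2.trans hπ)) _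

lemma volume_ball_eq_kappa (n : ℕ) (hn : 1 ≤ n) {R : ℝ} (hR : 0 ≤ R) :
    volume (ball (0 : EuclideanSpace ℝ (Fin n)) R) = ENNReal.ofReal (kappa n * R ^ n) := by
  have _ : Nonempty (Fin n) := ⟨⟨0, hn⟩⟩
  rw [EuclideanSpace.volume_ball, Fintype.card_fin, ← ENNReal.ofReal_pow hR,
    ← ENNReal.ofReal_mul (by positivity), kappa, mul_comm (R ^ n), Real.sqrt_eq_rpow,
    ← Real.rpow_natCast (Real.pi ^ (1 / 2 : ℝ)), ← Real.rpow_mul Real.pi_pos.le]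
  ring_nf

/-- If every `k`-plane meets `C` in a vector of norm `r`, the volume of `C` is at least that of the
`r₁`-ball times the relative volume of a sector of half-angle `α_{r₀}(r, r₁)` in `ℝᵏ`. -/
lemma key_inequality (n k : ℕ) (hk : 2 ≤ k) (hkn : k ≤ n)
    (C : Set (EuclideanSpace ℝ (Fin n)))
    (hCclosed : IsClosed C) (hCconv : Convex ℝ C)
    (r₀ r₁ r : ℝ) (h₀ : 0 < r₀) (h₁ : r₀ < r₁) (h₂ : r₁ < r)
    (hball : closedBall (0 : EuclideanSpace ℝ (Fin n)) r₀ ⊆ C)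
    (hP : ∀ P : Submodule ℝ (EuclideanSpace ℝ (Fin n)), Module.finrank ℝ P = k →
      ∃ x ∈ C, x ∈ P ∧ ‖x‖ = r) :
    volume (ball (0 : EuclideanSpace ℝ (Fin n)) r₁) *
        ∫⁻ θ in Set.Ioc 0 (alphaAngle r₀ r r₁), ENNReal.ofReal (Real.sin θ ^ (k - 2)) ≤
      volume C * ∫⁻ θ in Set.Ioc 0 Real.pi, ENNReal.ofReal (Real.sin θ ^ (k - 2)) := by
  obtain ⟨m, rfl⟩ : ∃ m, k = m + 1 := ⟨k - 1, by omega⟩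
  have hm : 1 ≤ m := by omega
  have _ : NeZero n := ⟨by omega⟩
  have hr₁ : 0 < r₁ := h₀.trans h₁
  have hr : 0 < r := hr₁.trans h₂
  obtain ⟨hα0, hαπ⟩ := alphaAngle_mem h₀ h₁ h₂
  have hC0 : (0 : EuclideanSpace ℝ (Fin n)) ∈ C := hball (by simp [h₀.le])
  obtain ⟨G, _, μ, T, hfin, hμ, hT, hinv⟩ :=
    exists_rotation_measure (EuclideanSpace ℝ (Fin n))
  let F := WithLp 2 (ℝ × EuclideanSpace ℝ (Fin m))
  have hFrank : Module.finrank ℝ F = m + 1 := by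
    rw [(WithLp.linearEquiv 2 ℝ (ℝ × EuclideanSpace ℝ (Fin m))).finrank_eq]
    simp [add_comm]
  have _ : Nontrivial F := Module.nontrivial_of_finrank_pos (R := ℝ) (by omega)
  obtain ⟨ι⟩ : Nonempty (F →ₗᵢ[ℝ] EuclideanSpace ℝ (Fin n)) := by
    let b := stdOrthonormalBasis ℝ F
    let e : Fin (Module.finrank ℝ F) ↪ Fin n := Fin.castLEEmb (by omega)
    have ho : Orthonormal ℝ fun i => EuclideanSpace.basisFun (Fin n) ℝ (e i) :=
      (EuclideanSpace.basisFun (Fin n) ℝ).orthonormal.comp e e.injective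
    let f := b.toBasis.constr ℝ fun i => EuclideanSpace.basisFun (Fin n) ℝ (e i)
    refine ⟨f.isometryOfOrthonormal (v := b.toBasis) (by simp) ?_⟩
    convert ho using 1
    ext1 i
    simp [f]
  -- The cone over the part of the sphere of radius `r₁` lying in `C`. At `v = 0` the junk value
  -- `0⁻¹ = 0` is harmless because `0 ∈ C`.
  let K : Set (EuclideanSpace ℝ (Fin n)) := {v | (r₁ * ‖v‖⁻¹) • v ∈ C}
  have hK : MeasurableSet K := by
    have : Measurable fun v : EuclideanSpace ℝ (Fin n) => (r₁ * ‖v‖⁻¹) • v := by fun_prop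
    exact this hCclosed.measurableSet
  have hcone : ∀ c : ℝ, 0 < c → ∀ v, c • v ∈ K ↔ v ∈ K := by
    intro c hc v
    have : (r₁ * ‖c • v‖⁻¹) • c • v = (r₁ * ‖v‖⁻¹) • v := by
      rw [norm_smul, Real.norm_of_nonneg hc.le, smul_smul, mul_inv]
      congr 1
      field_simp
    simp only [K, Set.mem_ofPred_eq, this]
  have hKC : K ∩ ball 0 r₁ ⊆ C := by
    rintro v ⟨hv, hvr⟩
    rw [mem_ball_zero_iff] at hvr
    rcases eq_or_ne v 0 with rfl | hv0
    · exact hC0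
    have hvp := norm_pos_iff.2 hv0
    have := hCconv.smul_mem_of_zero_mem hC0 (x := (r₁ * ‖v‖⁻¹) • v) hv (t := ‖v‖ / r₁)
      ⟨by positivity, (div_le_one hr₁).2 hvr.le⟩
    rwa [smul_smul, show ‖v‖ / r₁ * (r₁ * ‖v‖⁻¹) = 1 by field_simp, one_smul] at this
  let x₀ : F := WithLp.toLp 2 (r, 0)
  have hx₀ : ‖x₀‖ = r := norm_axis m hr
  have he : ι x₀ ≠ 0 := by
    rw [← norm_pos_iff, ι.norm_map, hx₀]; exact hr
  obtain ⟨A, hA⟩ := volume_sector m hm r₁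
  -- Each `k`-plane meets the cone `K` in at least a sector of half-angle `α_{r₀}(r, r₁)`.
  have hsec : ∀ g : G, A * ∫⁻ θ in Set.Ioc 0 (alphaAngle r₀ r r₁),
      ENNReal.ofReal (Real.sin θ ^ (m - 1)) ≤
      volume ({w : F | T g (ι w) ∈ K} ∩ ball 0 r₁) := by
    intro g
    let j : F →ₗᵢ[ℝ] EuclideanSpace ℝ (Fin n) := (T g).toLinearIsometry.comp ι
    obtain ⟨x, hxC, ⟨w, rfl⟩, hxr⟩ := hP (LinearMap.range j.toLinearMap)
      (by rw [LinearMap.finrank_range_of_inj j.injective, hFrank])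
    change j w ∈ C at hxC
    change ‖j w‖ = r at hxr
    rw [← hA _ hα0 hαπ]
    have hset : {v : F | ‖v‖ < r₁ ∧ ‖v‖ * Real.cos (alphaAngle r₀ r r₁) ≤ v.fst} =
        {v : F | ‖v‖ < r₁ ∧ ‖v‖ * (r * Real.cos (alphaAngle r₀ r r₁)) ≤ inner ℝ v x₀} := by
      ext v
      have : inner ℝ v x₀ = r * v.fst := inner_axis m r v
      simp only [Set.mem_ofPred_eq, this, mul_left_comm _ r, mul_le_mul_iff_right₀ hr]
    rw [hset, volume_sector_axis (F := F) r₁ _ (hx₀.trans (hxr.symm.trans (j.norm_map w)))]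
    refine measure_mono fun v hv => ⟨?_, mem_ball_zero_iff.2 hv.1⟩
    change (r₁ * ‖j v‖⁻¹) • j v ∈ C
    rcases eq_or_ne v 0 with rfl | hv0
    · simpa using hC0
    have hvp := norm_pos_iff.2 hv0
    rw [mul_smul]
    refine smul_mem_of_cap hCconv h₀ h₁ h₂ hball hxC hxr ?_ ?_
    · rw [norm_smul, norm_inv, norm_norm, j.norm_map, inv_mul_cancel₀ hvp.ne']
    · rw [real_inner_smul_left, j.inner_map_map, j.norm_map, le_inv_mul_iff₀ hvp]
      exact hv.2
  have hFball : volume (ball (0 : F) r₁) =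
      A * ∫⁻ θ in Set.Ioc 0 Real.pi, ENNReal.ofReal (Real.sin θ ^ (m - 1)) := by
    rw [← hA _ Real.pi_pos.le le_rfl]
    congr 1
    ext v
    have h3 : |v.fst| ≤ ‖v‖ := abs_fst_le_norm m v
    simp only [mem_ball_zero_iff, Real.cos_pi, mul_neg, mul_one]
    exact ⟨fun h => ⟨h, (abs_le.1 h3).1⟩, fun h => h.1⟩
  have hE := orbit_measure_mul_volume_ball hT hinv hcone hK LinearIsometry.id r₁ he
  have hF := orbit_measure_mul_volume_ball hT hinv hcone hK ι r₁ he
  rw [hFball] at hF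
  have hE' : μ {g | T g (ι x₀) ∈ K} * volume (ball (0 : EuclideanSpace ℝ (Fin n)) r₁) ≤
      μ Set.univ * volume C := by
    rw [hE, mul_comm, ← lintegral_const]
    refine lintegral_mono fun g => ?_
    have : {w : EuclideanSpace ℝ (Fin n) | T g ((LinearIsometry.id (R := ℝ)) w) ∈ K} ∩ ball 0 r₁ =
        T g ⁻¹' (K ∩ ball 0 r₁) := by
      ext w; simp
    rw [this, (T g).measurePreserving.measure_preimage
      (hK.inter measurableSet_ball).nullMeasurableSet]
    exact measure_mono hKC
  have hF' : μ Set.univ * (A * ∫⁻ θ in Set.Ioc 0 (alphaAngle r₀ r r₁),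
      ENNReal.ofReal (Real.sin θ ^ (m - 1))) ≤ μ {g | T g (ι x₀) ∈ K} *
        (A * ∫⁻ θ in Set.Ioc 0 Real.pi, ENNReal.ofReal (Real.sin θ ^ (m - 1))) := by
    rw [hF, mul_comm, ← lintegral_const]
    exact lintegral_mono hsec
  have hApos : A ≠ 0 ∧ A ≠ ⊤ := by
    have hpos : volume (ball (0 : F) r₁) ≠ 0 := (measure_ball_pos _ _ hr₁).ne'
    have htop : volume (ball (0 : F) r₁) ≠ ⊤ := measure_ball_lt_top.ne
    rw [hFball] at hpos htop
    refine ⟨fun h => hpos (by rw [h, zero_mul]), fun h => htop ?_⟩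
    rw [h, ENNReal.top_mul (right_ne_zero_of_mul hpos)]
  change _ * ∫⁻ θ in Set.Ioc 0 _, ENNReal.ofReal (Real.sin θ ^ (m - 1)) ≤
    _ * ∫⁻ θ in Set.Ioc 0 _, ENNReal.ofReal (Real.sin θ ^ (m - 1))
  generalize ∫⁻ θ in Set.Ioc 0 (alphaAngle r₀ r r₁), ENNReal.ofReal (Real.sin θ ^ (m - 1)) = I
    at hF' ⊢
  generalize ∫⁻ θ in Set.Ioc 0 Real.pi, ENNReal.ofReal (Real.sin θ ^ (m - 1)) = J at hF' ⊢
  generalize μ {g | T g (ι x₀) ∈ K} = D at hE' hF'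
  have hF'' : μ Set.univ * I ≤ D * J := by
    rw [mul_left_comm, mul_left_comm D] at hF'
    exact (ENNReal.mul_le_mul_iff_right hApos.1 hApos.2).1 hF'
  refine (ENNReal.mul_le_mul_iff_right hμ (measure_ne_top μ _)).1 ?_
  calc μ Set.univ * (volume (ball (0 : EuclideanSpace ℝ (Fin n)) r₁) * I)
      = volume (ball (0 : EuclideanSpace ℝ (Fin n)) r₁) * (μ Set.univ * I) := mul_left_comm _ _ _
    _ ≤ volume (ball (0 : EuclideanSpace ℝ (Fin n)) r₁) * (D * J) := by gcongr
    _ = (D * volume (ball (0 : EuclideanSpace ℝ (Fin n)) r₁)) * J := by ring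
    _ ≤ μ Set.univ * volume C * J := by gcongr
    _ = _ := mul_assoc _ _ _

/-- Corollary `basiccoreuc` (exact form): if `vol(C) < κ_n r₁ⁿ · ν(cap of radius α_{r₀}(r, r₁))`,
then some `k`-plane through the origin meets `C` inside the ball of radius `r`. -/
theorem basiccoreuc (n k : ℕ) (hn : 2 ≤ n) (hk : 2 ≤ k) (hkn : k ≤ n)
    (C : Set (EuclideanSpace ℝ (Fin n)))
    (hCclosed : IsClosed C) (hCconv : Convex ℝ C)
    (r₀ r₁ r : ℝ) (h₀ : 0 < r₀) (h₁ : r₀ < r₁) (h₂ : r₁ < r)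
    (hball : closedBall (0 : EuclideanSpace ℝ (Fin n)) r₀ ⊆ C)
    (hvolC : volume C <
      ENNReal.ofReal (kappa n * r₁ ^ n *
        (∫ t in (0:ℝ)..alphaAngle r₀ r r₁, Real.sin t ^ (k - 2)) /
        (∫ t in (0:ℝ)..Real.pi, Real.sin t ^ (k - 2)))) :
    ∃ P : Submodule ℝ (EuclideanSpace ℝ (Fin n)), Module.finrank ℝ P = k ∧
      C ∩ (P : Set (EuclideanSpace ℝ (Fin n))) ⊆ ball (0 : EuclideanSpace ℝ (Fin n)) r := by
  by_contra! hcon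
  have hr : 0 < r := h₀.trans (h₁.trans h₂)
  obtain ⟨hα0, hαπ⟩ := alphaAngle_mem h₀ h₁ h₂
  have hP : ∀ P : Submodule ℝ (EuclideanSpace ℝ (Fin n)), Module.finrank ℝ P = k →
      ∃ x ∈ C, x ∈ P ∧ ‖x‖ = r := by
    intro P hPk
    obtain ⟨x, ⟨hxC, hxP⟩, hx⟩ := Set.not_subset.1 (hcon P hPk)
    rw [mem_ball_zero_iff, not_lt] at hx
    have hxpos : 0 < ‖x‖ := hr.trans_le hx
    refine ⟨(r / ‖x‖) • x, hCconv.smul_mem_of_zero_mem (hball (by simp [h₀.le])) hxC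
      ⟨by positivity, (div_le_one hxpos).2 hx⟩, P.smul_mem _ hxP, ?_⟩
    rw [norm_smul, Real.norm_of_nonneg (by positivity), div_mul_cancel₀ _ hxpos.ne']
  have hkey := key_inequality n k hk hkn C hCclosed hCconv r₀ r₁ r h₀ h₁ h₂ hball hP
  have hJ : 0 < ∫ t in (0:ℝ)..Real.pi, Real.sin t ^ (k - 2) := integral_sin_pow_pos _
  have hI : 0 ≤ ∫ t in (0:ℝ)..alphaAngle r₀ r r₁, Real.sin t ^ (k - 2) :=
    intervalIntegral.integral_nonneg hα0 fun t ht =>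
      pow_nonneg (Real.sin_nonneg_of_nonneg_of_le_pi ht.1 (ht.2.trans hαπ)) _
  rw [ofReal_integral_sin_pow _ hα0 hαπ, ofReal_integral_sin_pow _ Real.pi_pos.le le_rfl,
    volume_ball_eq_kappa n (by omega) (h₀.trans h₁).le, ← ENNReal.ofReal_mul' hI] at hkey
  refine absurd hvolC (not_lt.2 ?_)
  rw [ENNReal.ofReal_div_of_pos hJ]
  exact ENNReal.div_le_of_le_mul hkey
end

section
/- Let n ≥ 2 and 2 ≤ k ≤ n be integers, let C ⊆ EuclideanSpace ℝ n be a closed convex set with closedBall(0, r₀) ⊆ C for some r₀ > 0, and let r > n·r₀/(n−k+1). If vol(C) < κ_n · κ_{k−1} · r₀^(k−1) · (k−1)^(k−1) · (n−k+1)^(n−k+1) · r^(n−k+1) / (ω_k · n^n), then there exists a k-dimensional linear subspace Π of EuclideanSpace ℝ n with C ∩ Π ⊆ ball(0, r). -/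
/-!
The proof averages over random `k`-dimensional central sections. Let `ρ` be a random isometric
embedding of a `k`-dimensional space `F` into `E = ℝⁿ`, obtained by composing a fixed embedding with
a Haar distributed orthogonal map. Since the law of `ρ y` depends only on `‖y‖`, polar coordinates
in `E` and in `F` give (`exists_random_embedding`)

`ω_k * vol C = ω_n * 𝔼 ∫_{ρ⁻¹ C} ‖y‖ ^ (n - k) dy`.

If no `k`-dimensional central section of `C` lies in `ball 0 r`, then by convexity every section
`ρ⁻¹ C` contains, besides the ball of radius `r₀`, a point at distance exactly `r` from the origin.
Hence it contains a cylinder of radius `c * r₀` around a segment of length `(1 - c) * r` starting at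
the origin (`cylinder_le`). Integrating the weight over this cylinder bounds the inner integral from
below by `((1 - c) * r) ^ (n - k + 1) / (n - k + 1) * κ_{k-1} * (c * r₀) ^ (k - 1)`. With
`c = (k - 1) / n` the resulting lower bound for `vol C` is `n / (n - k + 1)` times the assumed strict
upper bound, a contradiction.
-/

open Metric MeasureTheory

/-- `ω_m = m·κ_m`: the surface area of the unit sphere `S^{m-1}`. -/
noncomputable def omegaSph (m : ℕ) : ℝ := m * kappa m

/-- Integration in polar coordinates of a nonnegative radial function. -/
lemma lintegral_radial {E : Type*} [NormedAddCommGroup E] [NormedSpace ℝ E] [Nontrivial E]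
    [FiniteDimensional ℝ E] [MeasurableSpace E] [BorelSpace E] (μ : Measure E)
    [μ.IsAddHaarMeasure] {f : ℝ → ENNReal} (hf : Measurable f) :
    ∫⁻ x, f ‖x‖ ∂μ = (Module.finrank ℝ E : ENNReal) * μ (ball 0 1) *
      ∫⁻ t in Set.Ioi (0 : ℝ), ENNReal.ofReal (t ^ (Module.finrank ℝ E - 1)) * f t := by
  calc
    ∫⁻ x, f ‖x‖ ∂μ = ∫⁻ x : ({(0)}ᶜ : Set E), f ‖x.1‖ ∂(μ.comap (↑)) := by
      rw [lintegral_subtype_comap (measurableSet_singleton _).compl fun x ↦ f ‖x‖,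
        restrict_compl_singleton]
    _ = ∫⁻ x, f x.2 ∂μ.toSphere.prod (.volumeIoiPow (Module.finrank ℝ E - 1)) := by
      simpa using μ.measurePreserving_homeomorphUnitSphereProd.lintegral_comp_emb
        (Homeomorph.measurableEmbedding _) (f ∘ Subtype.val ∘ Prod.snd)
    _ = μ.toSphere Set.univ *
        ∫⁻ t : Set.Ioi (0 : ℝ), f t ∂.volumeIoiPow (Module.finrank ℝ E - 1) := by
      rw [lintegral_prod _ (by fun_prop)]
      simp only [lintegral_const]
      rw [mul_comm]
    _ = _ := by
      rw [μ.toSphere_apply_univ, Measure.volumeIoiPow,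
        lintegral_withDensity_eq_lintegral_mul _ (by fun_prop) (by fun_prop)]
      congr 1
      exact lintegral_subtype_comap measurableSet_Ioi
        fun t : ℝ ↦ ENNReal.ofReal (t ^ (Module.finrank ℝ E - 1)) * f t

/-- A random isometry `ρ` of `E` such that the law of `ρ x` depends only on `‖x‖`. It is the inverse
of a Haar distributed element of the compact group of unitary operators, so that left invariance
of the Haar measure suffices. -/
lemma exists_random_isometry (E : Type) [NormedAddCommGroup E] [InnerProductSpace ℝ E]
    [FiniteDimensional ℝ E] [MeasurableSpace E] [BorelSpace E] :
    ∃ (G : Type) (_ : MeasurableSpace G) (μ : Measure G) (_ : IsProbabilityMeasure μ)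
      (ρ : G → E ≃ₗᵢ[ℝ] E), Measurable (fun p : G × E ↦ ρ p.1 p.2) ∧
      ∀ (f : E → ENNReal) (x y : E), ‖x‖ = ‖y‖ →
        ∫⁻ g, f (ρ g x) ∂μ = ∫⁻ g, f (ρ g y) ∂μ := by
  have : CompleteSpace E := FiniteDimensional.complete ℝ E
  have : ProperSpace (E →L[ℝ] E) := FiniteDimensional.proper ℝ _
  have hcomp : IsCompact (unitary (E →L[ℝ] E) : Set (E →L[ℝ] E)) := by
    refine Metric.isCompact_of_isClosed_isBounded isClosed_unitary ?_
    refine (isBounded_closedBall (x := (0 : E →L[ℝ] E)) (r := 1)).subset fun u hu ↦ ?_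
    rw [mem_closedBall_zero_iff]
    refine ContinuousLinearMap.opNorm_le_bound _ zero_le_one fun x ↦ ?_
    rw [one_mul]
    exact ((Unitary.linearIsometryEquiv (⟨u, hu⟩ : unitary (E →L[ℝ] E))).norm_map x).le
  let G := unitary (E →L[ℝ] E)
  have : CompactSpace G := isCompact_iff_compactSpace.1 hcomp
  let _ : MeasurableSpace G := borel G
  have : BorelSpace G := ⟨rfl⟩
  let μ : Measure G := Measure.haarMeasure ⊤
  have : IsProbabilityMeasure μ := ⟨by
    simpa using Measure.haarMeasure_self (K₀ := (⊤ : TopologicalSpace.PositiveCompacts G))⟩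
  refine ⟨G, inferInstance, μ, inferInstance, fun g ↦ Unitary.linearIsometryEquiv g⁻¹, ?_, ?_⟩
  · have hc : Continuous (fun p : G × E ↦ ((p.1⁻¹ : G) : E →L[ℝ] E) p.2) :=
      (continuous_subtype_val.comp (continuous_inv.comp continuous_fst)).clm_apply continuous_snd
    have : SecondCountableTopology (E →L[ℝ] E) := inferInstance
    have : SecondCountableTopology G := inferInstance
    exact hc.measurable
  · intro f x y hxy
    obtain ⟨h, hh⟩ : ∃ h : G, Unitary.linearIsometryEquiv h x = y := by
      refine ⟨Unitary.linearIsometryEquiv.symm ((ℝ ∙ (x - y))ᗮ.reflection), ?_⟩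
      rw [MulEquiv.apply_symm_apply]
      exact Submodule.reflection_sub hxy
    rw [← lintegral_mul_left_eq_self
      (fun g ↦ f (Unitary.linearIsometryEquiv g⁻¹ y)) h]
    refine lintegral_congr fun g ↦ ?_
    rw [← hh, mul_inv_rev, map_mul, map_inv _ h]
    exact congrArg (fun z ↦ f (Unitary.linearIsometryEquiv g⁻¹ z))
      ((Unitary.linearIsometryEquiv h).symm_apply_apply x).symm

/-- Averaged over random isometric copies of `F` in `E`, the weight `‖y‖ ^ (dim E - dim F)` turns
the volume of the sections of `s` into a multiple of the volume of `s`. -/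
lemma exists_random_embedding {E F : Type} [NormedAddCommGroup E] [InnerProductSpace ℝ E]
    [FiniteDimensional ℝ E] [MeasurableSpace E] [BorelSpace E]
    [NormedAddCommGroup F] [InnerProductSpace ℝ F]
    [FiniteDimensional ℝ F] [MeasurableSpace F] [BorelSpace F] [Nontrivial F]
    (hdim : Module.finrank ℝ F ≤ Module.finrank ℝ E) {s : Set E} (hs : MeasurableSet s) :
    ∃ (G : Type) (_ : MeasurableSpace G) (μ : Measure G) (_ : IsProbabilityMeasure μ)
      (ρ : G → F →ₗᵢ[ℝ] E),
      (Module.finrank ℝ F : ENNReal) * volume (ball (0 : F) 1) * volume s =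
      (Module.finrank ℝ E : ENNReal) * volume (ball (0 : E) 1) *
        ∫⁻ g, (∫⁻ y in ρ g ⁻¹' s,
          ENNReal.ofReal (‖y‖ ^ (Module.finrank ℝ E - Module.finrank ℝ F))) ∂μ := by
  have hF : 0 < Module.finrank ℝ F := Module.finrank_pos
  have : Nontrivial E := Module.nontrivial_of_finrank_pos (R := ℝ) (hF.trans_le hdim)
  obtain ⟨G, mG, μ, hμ, ρ, hρ, hinv⟩ := exists_random_isometry E
  let bF := stdOrthonormalBasis ℝ F
  let bE := stdOrthonormalBasis ℝ E
  have hortho : Orthonormal ℝ (bF.toBasis.constr ℝ (fun i ↦ bE (Fin.castLE hdim i)) ∘ bF.toBasis) := by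
    have : (bF.toBasis.constr ℝ (fun i ↦ bE (Fin.castLE hdim i)) ∘ bF.toBasis) =
        bE ∘ Fin.castLE hdim := by
      ext1 i
      simp only [Function.comp_apply, Module.Basis.constr_basis]
    rw [this]
    exact bE.orthonormal.comp _ (Fin.castLE_injective hdim)
  have hbF : Orthonormal ℝ bF.toBasis := by simp [bF.orthonormal]
  let ι : F →ₗᵢ[ℝ] E := LinearMap.isometryOfOrthonormal _ hbF hortho
  refine ⟨G, mG, μ, hμ, fun g ↦ (ρ g).toLinearIsometry.comp ι, ?_⟩
  obtain ⟨e, he⟩ : ∃ e : E, ‖e‖ = 1 := exists_norm_eq E zero_le_one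
  have hind : Measurable (s.indicator (fun _ ↦ (1 : ENNReal))) := measurable_const.indicator hs
  have hjoint : Measurable (fun p : G × E ↦ s.indicator (fun _ ↦ (1 : ENNReal)) (ρ p.1 p.2)) :=
    hind.comp hρ
  -- `φ t` is the fraction of the sphere of radius `t` covered by `s`.
  let φ : ℝ → ENNReal := fun t ↦ ∫⁻ g, s.indicator (fun _ ↦ (1 : ENNReal)) (ρ g (t • e)) ∂μ
  have hφ : Measurable φ := by
    have h1 : Measurable (fun x : E ↦ ∫⁻ g, s.indicator (fun _ ↦ (1 : ENNReal)) (ρ g x) ∂μ) :=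
      hjoint.lintegral_prod_left'
    exact h1.comp (measurable_id.smul_const e)
  have hφ_norm : ∀ x : E, ∫⁻ g, s.indicator (fun _ ↦ (1 : ENNReal)) (ρ g x) ∂μ = φ ‖x‖ :=
    fun x ↦ hinv _ _ _ (by simp [norm_smul, he])
  have hvol : volume s = ∫⁻ x : E, φ ‖x‖ := by
    simp_rw [← hφ_norm]
    rw [lintegral_lintegral_swap (f := fun x g ↦ s.indicator (fun _ ↦ (1 : ENNReal)) (ρ g x))
      (hjoint.comp measurable_swap).aemeasurable]
    have : ∀ g, ∫⁻ x : E, s.indicator (fun _ ↦ (1 : ENNReal)) (ρ g x) = volume s := fun g ↦ by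
      rw [(ρ g).measurePreserving.lintegral_comp hind, lintegral_indicator_const hs, one_mul]
    simp [this]
  have hsec : ∫⁻ g, (∫⁻ y in ((ρ g).toLinearIsometry.comp ι) ⁻¹' s,
        ENNReal.ofReal (‖y‖ ^ (Module.finrank ℝ E - Module.finrank ℝ F))) ∂μ =
      ∫⁻ y : F, ENNReal.ofReal (‖y‖ ^ (Module.finrank ℝ E - Module.finrank ℝ F)) * φ ‖y‖ := by
    have h1 : ∀ g, ∫⁻ y in ((ρ g).toLinearIsometry.comp ι) ⁻¹' s,
        ENNReal.ofReal (‖y‖ ^ (Module.finrank ℝ E - Module.finrank ℝ F)) =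
        ∫⁻ y : F, ENNReal.ofReal (‖y‖ ^ (Module.finrank ℝ E - Module.finrank ℝ F)) *
          s.indicator (fun _ ↦ (1 : ENNReal)) (ρ g (ι y)) := fun g ↦ by
      rw [← lintegral_indicator (hs.preimage (LinearIsometry.continuous _).measurable)]
      refine lintegral_congr fun y ↦ ?_
      by_cases hy : ρ g (ι y) ∈ s <;> simp [hy]
    have hm : Measurable (fun p : G × F ↦
        s.indicator (fun _ ↦ (1 : ENNReal)) (ρ p.1 (ι p.2))) :=
      hjoint.comp (measurable_fst.prodMk (ι.continuous.measurable.comp measurable_snd))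
    simp_rw [h1]
    rw [lintegral_lintegral_swap]
    · refine lintegral_congr fun y ↦ ?_
      have hmy : Measurable (fun g : G ↦ s.indicator (fun _ ↦ (1 : ENNReal)) (ρ g (ι y))) :=
        hm.comp measurable_prodMk_right
      rw [lintegral_const_mul _ hmy, hφ_norm, ι.norm_map]
    · exact Measurable.aemeasurable (by unfold Function.uncurry; fun_prop)
  rw [hsec, hvol, lintegral_radial volume hφ,
    lintegral_radial (f := fun t ↦
      ENNReal.ofReal (t ^ (Module.finrank ℝ E - Module.finrank ℝ F)) * φ t) volume (by fun_prop)]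
  have hint : ∫⁻ t in Set.Ioi (0 : ℝ), ENNReal.ofReal (t ^ (Module.finrank ℝ F - 1)) *
        (ENNReal.ofReal (t ^ (Module.finrank ℝ E - Module.finrank ℝ F)) * φ t) =
      ∫⁻ t in Set.Ioi (0 : ℝ), ENNReal.ofReal (t ^ (Module.finrank ℝ E - 1)) * φ t := by
    refine setLIntegral_congr_fun measurableSet_Ioi fun t (ht : 0 < t) ↦ ?_
    rw [← mul_assoc, ← ENNReal.ofReal_mul (by positivity), ← pow_add]
    congr 4
    omega
  rw [hint]
  ring

/-- A convex set containing `closedBall 0 r₀` and a point at distance `r` from the origin contains a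
cylinder of radius `c * r₀` whose axis is the segment of length `(1 - c) * r` towards that point. -/
lemma cylinder_le {V : Type} [NormedAddCommGroup V] [InnerProductSpace ℝ V]
    [FiniteDimensional ℝ V] [MeasurableSpace V] [BorelSpace V]
    {D : Set (WithLp 2 (ℝ × V))} (hD : Convex ℝ D) {r₀ r c : ℝ} (hr : 0 < r)
    (hc : 0 < c) (hc1 : c ≤ 1)
    (hball : closedBall 0 r₀ ⊆ D) (hp : WithLp.toLp 2 (r, (0 : V)) ∈ D) (a : ℕ) :
    ENNReal.ofReal (((1 - c) * r) ^ (a + 1) / (a + 1)) * volume (closedBall (0 : V) (c * r₀)) ≤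
      ∫⁻ y in D, ENNReal.ofReal (‖y‖ ^ a) := by
  set A : Set (ℝ × V) := Set.Ioc 0 ((1 - c) * r) ×ˢ closedBall (0 : V) (c * r₀) with hA
  have hAm : MeasurableSet A := measurableSet_Ioc.prod measurableSet_closedBall
  have hs0 : 0 ≤ (1 - c) * r := mul_nonneg (by linarith) hr.le
  have hsub : WithLp.ofLp ⁻¹' A ⊆ D := by
    rintro y ⟨⟨h1, h2⟩, h3⟩
    rw [mem_closedBall_zero_iff] at h3
    have htr : y.fst / r ≤ 1 - c := (div_le_iff₀ hr).2 h2
    have hpos : 0 < 1 - y.fst / r := by linarith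
    have hz : WithLp.toLp 2 ((0 : ℝ), (1 - y.fst / r)⁻¹ • y.snd) ∈ D := by
      refine hball ?_
      rw [mem_closedBall_zero_iff, WithLp.norm_toLp_snd, norm_smul, Real.norm_of_nonneg (inv_nonneg.2 hpos.le),
        inv_mul_le_iff₀ hpos]
      have hr0 : 0 ≤ r₀ := by
        by_contra! h
        exact absurd ((norm_nonneg _).trans h3) (by nlinarith)
      exact h3.trans (mul_le_mul_of_nonneg_right (by linarith) hr0)
    have := hD hp hz (a := y.fst / r) (b := 1 - y.fst / r) (div_nonneg h1.le hr.le) hpos.le (by ring)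
    convert this using 1
    apply WithLp.ofLp_injective
    ext
    · simp [hr.ne']
    · simp [smul_smul, hpos.ne']
  calc
    _ = ∫⁻ p in A, ENNReal.ofReal (p.1 ^ a) := by
      rw [hA, Measure.volume_eq_prod, ← Measure.prod_restrict, lintegral_prod _ (by fun_prop)]
      simp only [lintegral_const, Measure.restrict_apply_univ]
      rw [lintegral_mul_const _ (by fun_prop), ← ofReal_integral_eq_lintegral_ofReal]
      · rw [← intervalIntegral.integral_of_le hs0]
        simp
      · exact (intervalIntegral.intervalIntegrable_pow a).1
      · filter_upwards [ae_restrict_mem measurableSet_Ioc] with t ht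
        exact pow_nonneg ht.1.le _
    _ = ∫⁻ y in WithLp.ofLp ⁻¹' A, ENNReal.ofReal ((WithLp.ofLp y).1 ^ a) :=
      ((WithLp.volume_preserving_ofLp ℝ V).setLIntegral_comp_preimage hAm
        (f := fun p : ℝ × V ↦ ENNReal.ofReal (p.1 ^ a)) (by fun_prop)).symm
    _ ≤ ∫⁻ y in WithLp.ofLp ⁻¹' A, ENNReal.ofReal (‖y‖ ^ a) := by
      refine setLIntegral_mono' (hAm.preimage (WithLp.volume_preserving_ofLp ℝ V).measurable)
        fun y hy ↦ ENNReal.ofReal_le_ofReal (pow_le_pow_left₀ hy.1.1.le ?_ _)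
      exact (le_abs_self _).trans (WithLp.norm_fst_le _ y)
    _ ≤ _ := lintegral_mono_set hsub

lemma volume_closedBall_kappa {V : Type} [NormedAddCommGroup V] [InnerProductSpace ℝ V]
    [FiniteDimensional ℝ V] [MeasurableSpace V] [BorelSpace V] [Nontrivial V] {ε : ℝ}
    (hε : 0 ≤ ε) :
    volume (closedBall (0 : V) ε) =
      ENNReal.ofReal (ε ^ Module.finrank ℝ V * kappa (Module.finrank ℝ V)) := by
  rw [InnerProductSpace.volume_closedBall, kappa, Real.sqrt_eq_rpow, ← Real.rpow_mul_natCast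
    Real.pi_pos.le, ENNReal.ofReal_mul (by positivity), ENNReal.ofReal_pow hε]
  congr 4
  ring

lemma kappa_pos (m : ℕ) : 0 < kappa m := by
  unfold kappa
  have := Real.Gamma_pos_of_pos (s := (m : ℝ) / 2 + 1) (by positivity)
  positivity

/-- Theorem `mainthmeuc` (with scale-invariant constants): a closed convex set containing
`closedBall 0 r₀` whose volume is less than
`κ_n κ_{k-1} r₀^{k-1} (k-1)^{k-1} (n-k+1)^{n-k+1} r^{n-k+1} / (ω_k nⁿ)` has a `k`-dimensional
central section contained in `ball 0 r`. -/
theorem mainthmeuc (n k : ℕ) (hn : 2 ≤ n) (hk : 2 ≤ k) (hkn : k ≤ n)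
    (C : Set (EuclideanSpace ℝ (Fin n)))
    (hCclosed : IsClosed C) (hCconv : Convex ℝ C)
    (r₀ r : ℝ) (h₀ : 0 < r₀)
    (hball : closedBall (0 : EuclideanSpace ℝ (Fin n)) r₀ ⊆ C)
    (hr : r > n * r₀ / ((n : ℝ) - k + 1))
    (hvolC : volume C <
      ENNReal.ofReal (kappa n * kappa (k - 1) * r₀ ^ (k - 1) * ((k : ℝ) - 1) ^ (k - 1) *
        ((n : ℝ) - k + 1) ^ (n - k + 1) * r ^ (n - k + 1) / (omegaSph k * (n : ℝ) ^ n))) :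
    ∃ P : Submodule ℝ (EuclideanSpace ℝ (Fin n)), Module.finrank ℝ P = k ∧
      C ∩ (P : Set (EuclideanSpace ℝ (Fin n))) ⊆ ball (0 : EuclideanSpace ℝ (Fin n)) r := by
  by_contra! hcon
  let V := EuclideanSpace ℝ (Fin (k - 1))
  let F := WithLp 2 (ℝ × V)
  have hfV : Module.finrank ℝ V = k - 1 := by simp [V]
  have hfE : Module.finrank ℝ (EuclideanSpace ℝ (Fin n)) = n := by simp
  have hfF : Module.finrank ℝ F = k := by
    rw [(WithLp.linearEquiv 2 ℝ (ℝ × V)).finrank_eq, Module.finrank_prod, hfV, Module.finrank_self]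
    omega
  have : Nontrivial V := Module.nontrivial_of_finrank_pos (R := ℝ) (by omega)
  have : Nontrivial F := Module.nontrivial_of_finrank_pos (R := ℝ) (by omega)
  have : Nontrivial (EuclideanSpace ℝ (Fin n)) :=
    Module.nontrivial_of_finrank_pos (R := ℝ) (by omega)
  have hn0 : (0 : ℝ) < n := by positivity
  have hk1 : (1 : ℝ) < k := by exact_mod_cast hk
  have hkn' : (k : ℝ) ≤ n := by exact_mod_cast hkn
  have hr0 : 0 < r := lt_of_le_of_lt (div_nonneg (by positivity) (by linarith)) hr
  -- This ratio maximizes `c ^ (k - 1) * (1 - c) ^ (n - k + 1)`, hence the cylinder estimate.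
  set c : ℝ := ((k : ℝ) - 1) / n with hc
  have hcpos : 0 < c := div_pos (by linarith) hn0
  have hc1 : c ≤ 1 := (div_le_one hn0).2 (by linarith)
  have hcc : 1 - c = ((n : ℝ) - k + 1) / n := by rw [hc]; field_simp; ring
  obtain ⟨G, mG, μ, hμ, ρ, hρ⟩ := exists_random_embedding (F := F)
    (hfF.trans_le (hkn.trans hfE.ge)) hCclosed.measurableSet
  rw [hfF, hfE] at hρ
  set L : ENNReal := ENNReal.ofReal (((1 - c) * r) ^ (n - k + 1) / ((n - k : ℕ) + 1)) *
    volume (closedBall (0 : V) (c * r₀)) with hL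
  have hsec : ∀ g, L ≤ ∫⁻ y in ρ g ⁻¹' C, ENNReal.ofReal (‖y‖ ^ (n - k)) := by
    intro g
    obtain ⟨x, ⟨hxC, hxP⟩, hxr⟩ := Set.not_subset.1 (hcon (LinearMap.range (ρ g).toLinearMap)
      ((LinearMap.finrank_range_of_inj (ρ g).injective).trans hfF))
    obtain ⟨y, rfl⟩ := hxP
    change ρ g y ∈ C at hxC
    change ρ g y ∉ _ at hxr
    rw [mem_ball_zero_iff, not_lt, LinearIsometry.norm_map] at hxr
    have hy0 : 0 < ‖y‖ := hr0.trans_le hxr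
    set D : Set F := ρ g ⁻¹' C with hDdef
    have hDconv : Convex ℝ D := hCconv.linear_preimage (ρ g).toLinearMap
    have hDball : closedBall 0 r₀ ⊆ D := fun z hz ↦ hball (by simpa using hz)
    have hD0 : (0 : F) ∈ D := hDball (by simpa using h₀.le)
    have hDm : MeasurableSet D := (hCclosed.preimage (ρ g).continuous).measurableSet
    let p : F := (r / ‖y‖) • y
    have hpD : p ∈ D :=
      hDconv.smul_mem_of_zero_mem hD0 hxC ⟨by positivity, (div_le_one hy0).2 hxr⟩
    let q : F := WithLp.toLp 2 (r, (0 : V))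
    have hpq : ‖q‖ = ‖p‖ := by
      rw [norm_smul, Real.norm_of_nonneg (by positivity), div_mul_cancel₀ _ hy0.ne',
        WithLp.norm_toLp_fst, Real.norm_of_nonneg hr0.le]
    -- Reflect the section so that its far point lies on the first axis of `ℝ × V`.
    let T : F ≃ₗᵢ[ℝ] F := (ℝ ∙ (q - p))ᗮ.reflection
    have hT : T q = p := Submodule.reflection_sub hpq
    calc L ≤ ∫⁻ y in T ⁻¹' D, ENNReal.ofReal (‖y‖ ^ (n - k)) := by
          refine cylinder_le (hDconv.linear_preimage T.toLinearEquiv.toLinearMap) hr0 hcpos hc1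
            (fun z hz ↦ hDball (by simpa using hz)) ?_ (n - k)
          change T q ∈ D
          rwa [hT]
      _ = ∫⁻ y in T ⁻¹' D, ENNReal.ofReal (‖T y‖ ^ (n - k)) := by simp only [T.norm_map]
      _ = _ := T.measurePreserving.setLIntegral_comp_preimage hDm
          (f := fun y ↦ ENNReal.ofReal (‖y‖ ^ (n - k))) (by fun_prop)
  have hLint : L ≤ ∫⁻ g, (∫⁻ y in ρ g ⁻¹' C, ENNReal.ofReal (‖y‖ ^ (n - k))) ∂μ := by
    calc L = ∫⁻ _, L ∂μ := by simp
      _ ≤ _ := lintegral_mono hsec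
  have hballF : volume (ball (0 : F) 1) = ENNReal.ofReal (kappa k) := by
    rw [← Measure.addHaar_closedBall_eq_addHaar_ball, volume_closedBall_kappa zero_le_one, hfF]
    simp
  have hballE : volume (ball (0 : EuclideanSpace ℝ (Fin n)) 1) = ENNReal.ofReal (kappa n) := by
    rw [← Measure.addHaar_closedBall_eq_addHaar_ball, volume_closedBall_kappa zero_le_one, hfE]
    simp
  have hκk := kappa_pos k
  have hκn := kappa_pos n
  have hκk1 := kappa_pos (k - 1)
  have key : (n : ENNReal) * ENNReal.ofReal (kappa n) * L ≤
      k * ENNReal.ofReal (kappa k) * volume C := by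
    rw [← hballF, ← hballE, hρ]
    gcongr
  have hlt := ENNReal.mul_lt_mul_right (a := k * ENNReal.ofReal (kappa k))
    (mul_ne_zero (by simp; omega) (by simpa using hκk))
    (ENNReal.mul_ne_top (by simp) (by simp)) hvolC
  refine absurd (key.trans_lt hlt) (not_lt.2 ?_)
  have hnk : ((n - k : ℕ) : ℝ) = n - k := Nat.cast_sub hkn
  have hm : 0 < (n : ℝ) - k + 1 := by linarith
  rw [hL, volume_closedBall_kappa (by positivity), hfV, hcc, hnk, ← ENNReal.ofReal_natCast n,
    ← ENNReal.ofReal_natCast k, ← ENNReal.ofReal_mul (by positivity),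
    ← ENNReal.ofReal_mul (by positivity), ← ENNReal.ofReal_mul (by positivity),
    ← ENNReal.ofReal_mul (by positivity), ← ENNReal.ofReal_mul (by positivity)]
  refine ENNReal.ofReal_le_ofReal ?_
  have hpow : (n : ℝ) ^ n = n ^ (n - k + 1) * n ^ (k - 1) := by
    rw [← pow_add]; congr 1; omega
  rw [hpow, hc, omegaSph]
  set X := kappa n * kappa (k - 1) * r₀ ^ (k - 1) * ((k : ℝ) - 1) ^ (k - 1) *
        ((n : ℝ) - k + 1) ^ (n - k + 1) * r ^ (n - k + 1) / (n ^ (n - k + 1) * n ^ (k - 1)) with hX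
  have hXpos : 0 ≤ X := by
    have : 0 < (k : ℝ) - 1 := by linarith
    positivity
  calc _ = X := by rw [hX]; field_simp
    -- The averaging argument gives a bound better by the factor `n / (n - k + 1) ≥ 1`.
    _ ≤ X * (n / ((n : ℝ) - k + 1)) :=
      le_mul_of_one_le_right hXpos ((one_le_div hm).2 (by linarith))
    _ = _ := by
      rw [hX]
      simp only [mul_pow, div_pow]
      field_simp
end

section
/- Let Л(x) = −∫₀^x log(2·|sin t|) dt be the Lobachevsky function. Then the ratio (Л(θ) + 2·Л(π/2 − θ/2)) / (−θ·log θ) tends to 1 as θ → 0 from the right. -/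
/-!
Since `∫₀^{π/2} log (sin t) dt = -(π/2) log 2`, the Lobachevsky function `lob` vanishes at `0` and
`π / 2`, and it is continuous, so `V θ = lob θ + 2 * lob (π / 2 - θ / 2)` tends to `0` with `θ`.
By the duplication formula for the sine,
`V' θ = -log (2 sin θ) + log (2 cos (θ / 2)) = -log (2 sin (θ / 2)) = -(log θ + log (sinc (θ / 2)))`.
The derivative of `-θ log θ` is `-(log θ + 1)`, so the quotient of derivatives tends to `1`, and
L'Hôpital's rule applies.
-/

open Real Filter

/-- The Lobachevsky function `Л(x) = -∫₀ˣ log(2|sin t|) dt`. -/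
noncomputable def lob (x : ℝ) : ℝ := -∫ t in (0:ℝ)..x, Real.log (2 * |Real.sin t|)

lemma intervalIntegrable_log_two_mul_abs_sin (a b : ℝ) :
    IntervalIntegrable (fun t : ℝ => Real.log (2 * |Real.sin t|)) MeasureTheory.volume a b := by
  have h : IntervalIntegrable (fun t : ℝ => Real.log 2 + Real.log (Real.sin t))
      MeasureTheory.volume a b :=
    intervalIntegrable_const.add intervalIntegrable_log_sin
  refine h.congr_ae ?_
  -- The two integrands differ only on the countable zero set of `sin`, where `log 0 = 0`.
  have hc : {t : ℝ | Real.sin t = 0}.Countable := by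
    have : {t : ℝ | Real.sin t = 0} = Set.range (fun n : ℤ => (n : ℝ) * Real.pi) := by
      ext t
      simp [Real.sin_eq_zero_iff]
    rw [this]
    exact Set.countable_range _
  refine MeasureTheory.ae_restrict_of_ae ?_
  filter_upwards [hc.ae_notMem MeasureTheory.volume] with t ht
  have ht : Real.sin t ≠ 0 := ht
  rw [Real.log_mul two_ne_zero (abs_ne_zero.2 ht), Real.log_abs]

lemma continuous_lob : Continuous lob :=
  (intervalIntegral.continuous_primitive intervalIntegrable_log_two_mul_abs_sin 0).neg

lemma lob_zero : lob 0 = 0 := by simp [lob]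

lemma lob_pi_div_two : lob (Real.pi / 2) = 0 := by
  have h : ∫ t in (0:ℝ)..(Real.pi / 2), Real.log (2 * |Real.sin t|)
      = ∫ t in (0:ℝ)..(Real.pi / 2), (Real.log 2 + Real.log (Real.sin t)) := by
    refine intervalIntegral.integral_congr_uIoo fun t ht => ?_
    rw [Set.uIoo_of_le (by positivity)] at ht
    have hs := Real.sin_pos_of_pos_of_lt_pi ht.1 (by linarith [ht.2, Real.pi_pos])
    rw [Real.log_mul two_ne_zero (abs_ne_zero.2 hs.ne'), Real.log_abs]
  have hi : IntervalIntegrable (fun t : ℝ => Real.log (Real.sin t)) MeasureTheory.volume 0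
      (Real.pi / 2) := intervalIntegrable_log_sin
  rw [lob, h, intervalIntegral.integral_add intervalIntegrable_const hi,
    integral_log_sin_zero_pi_div_two, intervalIntegral.integral_const, smul_eq_mul]
  ring

lemma hasDerivAt_lob {x : ℝ} (hx : Real.sin x ≠ 0) :
    HasDerivAt lob (-Real.log (2 * |Real.sin x|)) x := by
  have hm : Measurable (fun t : ℝ => Real.log (2 * |Real.sin t|)) := by fun_prop
  have hc : ContinuousAt (fun t : ℝ => Real.log (2 * |Real.sin t|)) x :=
    ContinuousAt.log (by fun_prop) (by simpa using hx)
  exact (intervalIntegral.integral_hasDerivAt_right (intervalIntegrable_log_two_mul_abs_sin 0 x)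
    hm.stronglyMeasurable.stronglyMeasurableAtFilter hc).neg

lemma hasDerivAt_volume {θ : ℝ} (h0 : 0 < θ) (h1 : θ < 1) :
    HasDerivAt (fun θ : ℝ => lob θ + 2 * lob (Real.pi / 2 - θ / 2))
      (-(Real.log θ + Real.log (Real.sinc (θ / 2)))) θ := by
  have hpi := Real.pi_gt_three
  have hs : 0 < Real.sin (θ / 2) := Real.sin_pos_of_pos_of_lt_pi (by linarith) (by linarith)
  have hc : 0 < Real.cos (θ / 2) := Real.cos_pos_of_mem_Ioo ⟨by linarith, by linarith⟩
  have hd : Real.sin θ = 2 * Real.sin (θ / 2) * Real.cos (θ / 2) := by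
    rw [← Real.sin_two_mul]
    congr 1
    ring
  have hsθ : 0 < Real.sin θ := by rw [hd]; positivity
  have hr : Real.sin (Real.pi / 2 - θ / 2) = Real.cos (θ / 2) := Real.sin_pi_div_two_sub _
  have hi : HasDerivAt (fun θ : ℝ => Real.pi / 2 - θ / 2) (-(1 / 2)) θ :=
    ((hasDerivAt_id θ).div_const 2).const_sub (Real.pi / 2)
  have hl := (hasDerivAt_lob (x := Real.pi / 2 - θ / 2) (by rw [hr]; exact hc.ne')).comp θ hi
  refine ((hasDerivAt_lob hsθ.ne').add (hl.const_mul 2)).congr_deriv ?_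
  rw [hr, abs_of_pos hsθ, abs_of_pos hc, hd, Real.sinc_of_ne_zero (by positivity),
    Real.log_mul (by positivity) (by positivity), Real.log_mul (by positivity) (by positivity),
    Real.log_mul (by positivity) (by positivity), Real.log_mul (by positivity) (by positivity),
    Real.log_div (by positivity) (by positivity), Real.log_div (by positivity) (by positivity)]
  ring

lemma tendsto_deriv_ratio :
    Tendsto (fun θ : ℝ => -(Real.log θ + Real.log (Real.sinc (θ / 2))) / -(Real.log θ + 1))
      (nhdsWithin 0 (Set.Ioi 0)) (nhds 1) := by
  have hb : Tendsto (fun θ : ℝ => Real.log θ + 1) (nhdsWithin 0 (Set.Ioi 0)) atBot :=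
    tendsto_atBot_add_const_right _ _ Real.tendsto_log_nhdsGT_zero
  have hsinc : Tendsto (fun θ : ℝ => Real.log (Real.sinc (θ / 2)) - 1)
      (nhdsWithin 0 (Set.Ioi 0)) (nhds (-1)) := by
    have hc : ContinuousAt (fun θ : ℝ => Real.log (Real.sinc (θ / 2)) - 1) 0 :=
      (ContinuousAt.log (Real.continuous_sinc.comp (continuous_id.div_const 2)).continuousAt
        (by simp)).sub continuousAt_const
    have := hc.tendsto.mono_left (nhdsWithin_le_nhds (s := Set.Ioi 0))
    simpa using this
  have h := (hsinc.div_atBot hb).const_add 1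
  rw [add_zero] at h
  refine h.congr' ?_
  filter_upwards [hb.eventually_lt_atBot 0] with θ hθ
  have := hθ.ne
  rw [neg_div_neg_eq]
  field_simp
  ring

/-- Lemma `vol3`: the volume `V(T_θ) = Л(θ) + 2Л(π/2 - θ/2)` of the ideal tetrahedron
satisfies `V(T_θ) ∼ -θ log θ` as `θ → 0⁺`. -/
theorem vol3 :
    Tendsto (fun θ : ℝ => (lob θ + 2 * lob (Real.pi / 2 - θ / 2)) / (-(θ * Real.log θ)))
      (nhdsWithin 0 (Set.Ioi 0)) (nhds 1) := by
  have hb : Tendsto (fun θ : ℝ => Real.log θ + 1) (nhdsWithin 0 (Set.Ioi 0)) atBot :=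
    tendsto_atBot_add_const_right _ _ Real.tendsto_log_nhdsGT_zero
  have hpos : ∀ᶠ θ : ℝ in nhdsWithin 0 (Set.Ioi 0), 0 < θ := self_mem_nhdsWithin
  refine HasDerivAt.lhopital_zero_nhdsGT (f' := fun θ => -(Real.log θ + Real.log (Real.sinc (θ / 2))))
    (g' := fun θ => -(Real.log θ + 1)) ?_ ?_ ?_ ?_ ?_ tendsto_deriv_ratio
  · filter_upwards [Ioo_mem_nhdsGT (zero_lt_one (α := ℝ))] with θ hθ
    exact hasDerivAt_volume hθ.1 hθ.2
  · filter_upwards [hpos] with θ hθ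
    exact (Real.hasDerivAt_mul_log hθ.ne').neg
  · filter_upwards [hb.eventually_lt_atBot 0] with θ hθ
    exact neg_ne_zero.2 hθ.ne
  · have hc : Continuous (fun θ : ℝ => lob θ + 2 * lob (Real.pi / 2 - θ / 2)) :=
      continuous_lob.add (continuous_const.mul (continuous_lob.comp (by fun_prop)))
    have := (hc.tendsto 0).mono_left (nhdsWithin_le_nhds (s := Set.Ioi 0))
    simpa [lob_zero, lob_pi_div_two] using this
  · have := (Real.continuous_mul_log.neg.tendsto 0).mono_left (nhdsWithin_le_nhds (s := Set.Ioi 0))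
    simpa [Pi.neg_def] using this
end

section
/- Let 0 < α < 1/2 and set c = π·(1 − 2α). Then the series ∑_{m=0}^∞ 2^m · ( Л(c·α^m) + 2·Л(π/2 − c·α^m/2) ) is summable. -/
/-!
Write `x = c α ^ m`, which tends to `0`. On `(0, π / 2]` one has `t ≤ 2 sin t ≤ 2`.

* Integrating `|log (2 sin t)| ≤ log 2 - log t` gives `|Л(x)| ≤ x (log 2 + 1 - log x)` for
  `0 < x ≤ 1` (`abs_lob_le`).
* Since `Л(π / 2) = 0` (Euler's integral of `log ∘ sin`) and `0 ≤ log (2 sin t) ≤ log 2` on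
  `[1, π / 2]`, one has `|Л(π / 2 - x / 2)| ≤ (x / 2) log 2` for `x ≤ 1` (`abs_lob_pi_div_two_sub_le`).

As `log x = log c + m log α`, the `m`-th summand is eventually at most `(A + B m) (2 α) ^ m` in
absolute value, with constants `A` and `B`; this is summable because `2 α < 1`.
-/

open Real

lemma le_two_mul_sin {t : ℝ} (h0 : 0 ≤ t) (h1 : t ≤ π / 2) : t ≤ 2 * sin t := by
  have h := mul_le_sin h0 h1
  have h2 : t / 2 ≤ 2 / π * t := by
    rw [div_mul_eq_mul_div, div_le_div_iff₀ two_pos pi_pos]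
    nlinarith [pi_le_four]
  linarith

lemma abs_lob_le {x : ℝ} (h0 : 0 < x) (h1 : x ≤ 1) :
    |lob x| ≤ x * (log 2 + 1 - log x) := by
  have key : ‖∫ t in (0:ℝ)..x, log (2 * |sin t|)‖ ≤ ∫ t in (0:ℝ)..x, (log 2 - log t) := by
    refine intervalIntegral.norm_integral_le_of_norm_le h0.le (.of_forall fun t ht => ?_)
      (intervalIntegrable_const.sub intervalIntegral.intervalIntegrable_log')
    have ht1 : t ≤ 1 := ht.2.trans h1
    have hs := le_two_mul_sin ht.1.le (by linarith [pi_gt_three])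
    have ht0 := ht.1
    have hlow := log_le_log ht0 hs
    have hup := log_le_log (ht0.trans_le hs) (by linarith [sin_le_one t] : 2 * sin t ≤ 2)
    have hlog := log_nonpos ht0.le ht1
    have hl2 := log_pos one_lt_two
    rw [abs_of_pos (by linarith : 0 < sin t), norm_eq_abs, abs_le]
    constructor <;> linarith
  rw [intervalIntegral.integral_sub intervalIntegrable_const
    intervalIntegral.intervalIntegrable_log', integral_log, intervalIntegral.integral_const] at key
  rw [lob, abs_neg, ← norm_eq_abs]
  refine key.trans (le_of_eq ?_)
  simp only [smul_eq_mul]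
  ring

/-- The interval excludes `t = 0`, where the two sides differ because `log 0 = 0`. -/
lemma log_two_mul_abs_sin {t : ℝ} (ht : t ∈ Set.uIoc 0 (π / 2)) :
    log 2 + log (sin t) = log (2 * |sin t|) := by
  rw [Set.uIoc_of_le (by positivity)] at ht
  have h : 0 < sin t := sin_pos_of_pos_of_lt_pi ht.1 (by linarith [ht.2, pi_pos])
  rw [abs_of_pos h, log_mul two_ne_zero h.ne']

lemma intervalIntegrable_log_two_mul_abs_sin_s17 :
    IntervalIntegrable (fun t => log (2 * |sin t|)) MeasureTheory.volume 0 (π / 2) :=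
  (intervalIntegrable_const.add intervalIntegrable_log_sin).congr
    (fun _ ht => log_two_mul_abs_sin ht)

lemma integral_log_two_mul_abs_sin : ∫ t in (0:ℝ)..(π / 2), log (2 * |sin t|) = 0 := by
  have h : ∫ t in (0:ℝ)..(π / 2), log (2 * |sin t|)
      = ∫ t in (0:ℝ)..(π / 2), (log 2 + log (sin t)) :=
    intervalIntegral.integral_congr_ae (.of_forall fun _ ht => (log_two_mul_abs_sin ht).symm)
  have hI : IntervalIntegrable (fun t => log (sin t)) MeasureTheory.volume 0 (π / 2) :=
    intervalIntegrable_log_sin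
  rw [h, intervalIntegral.integral_add intervalIntegrable_const hI,
    integral_log_sin_zero_pi_div_two, intervalIntegral.integral_const]
  simp only [smul_eq_mul]
  ring

lemma abs_lob_pi_div_two_sub_le {y : ℝ} (h0 : 0 ≤ y) (h1 : y ≤ 1 / 2) :
    |lob (π / 2 - y)| ≤ y * log 2 := by
  have hpi := pi_gt_three
  have hsplit : lob (π / 2 - y) = ∫ t in (π / 2 - y)..(π / 2), log (2 * |sin t|) := by
    have hI := intervalIntegrable_log_two_mul_abs_sin_s17
    have hadd := intervalIntegral.integral_add_adjacent_intervals
      (hI.mono_set (c := 0) (d := π / 2 - y) (by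
        rw [Set.uIcc_of_le (by linarith), Set.uIcc_of_le (by linarith)]
        exact Set.Icc_subset_Icc le_rfl (by linarith)))
      (hI.mono_set (c := π / 2 - y) (d := π / 2) (by
        rw [Set.uIcc_of_le (by linarith), Set.uIcc_of_le (by linarith)]
        exact Set.Icc_subset_Icc (by linarith) le_rfl))
    rw [integral_log_two_mul_abs_sin] at hadd
    rw [lob]
    linarith
  have key : ‖∫ t in (π / 2 - y)..(π / 2), log (2 * |sin t|)‖
      ≤ log 2 * |π / 2 - (π / 2 - y)| := by
    refine intervalIntegral.norm_integral_le_of_norm_le_const fun t ht => ?_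
    rw [Set.uIoc_of_le (by linarith)] at ht
    -- `π / 2 - y ≥ 1`, so the integrand is nonnegative here
    have ht1 : 1 ≤ t := by linarith [ht.1]
    have hs := le_two_mul_sin (by linarith) ht.2
    rw [abs_of_pos (by linarith : 0 < sin t), norm_eq_abs, abs_of_nonneg (log_nonneg (by linarith))]
    exact log_le_log (by linarith) (by linarith [sin_le_one t])
  rw [hsplit, ← norm_eq_abs]
  rwa [sub_sub_cancel, abs_of_nonneg h0, mul_comm] at key

/-- Summability of the total volume of the ideal tetrahedra arising in the Cantor set
construction (Eq. (9.3) of the paper): for `0 < α < 1/2` and `c = π(1-2α)`, the series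
`∑ 2^m (Л(c α^m) + 2Л(π/2 - c α^m/2))` converges. -/
theorem cantorvol (α : ℝ) (hα : 0 < α) (hα' : α < 1 / 2) :
    Summable (fun m : ℕ =>
      2 ^ m * (lob (Real.pi * (1 - 2 * α) * α ^ m) +
        2 * lob (Real.pi / 2 - Real.pi * (1 - 2 * α) * α ^ m / 2))) := by
  set c := π * (1 - 2 * α) with hc
  have hcpos : 0 < c := mul_pos pi_pos (by linarith)
  have hr : ‖2 * α‖ < 1 := by
    rw [norm_eq_abs, abs_of_pos (by linarith)]
    linarith
  have hs0 : Summable fun m : ℕ => (2 * α) ^ m := summable_geometric_of_norm_lt_one hr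
  have hs1 : Summable fun m : ℕ => (m : ℝ) * (2 * α) ^ m := by
    simpa using summable_pow_mul_geometric_of_norm_lt_one 1 hr
  have hlim : Filter.Tendsto (fun m : ℕ => c * α ^ m) Filter.atTop (nhds 0) := by
    simpa using (tendsto_pow_atTop_nhds_zero_of_lt_one hα.le (by linarith)).const_mul c
  refine Summable.of_norm_bounded_eventually_nat
    ((hs0.mul_left (c * (2 * log 2 + 1 - log c))).add (hs1.mul_left (-(c * log α)))) ?_
  filter_upwards [hlim.eventually_le_const one_pos] with m hm
  have hx : 0 < c * α ^ m := by positivity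
  have h1 := abs_lob_le hx hm
  have h2 := abs_lob_pi_div_two_sub_le (y := c * α ^ m / 2) (by linarith) (by linarith)
  rw [log_mul hcpos.ne' (pow_pos hα m).ne', log_pow] at h1
  have h3 := abs_add_le (lob (c * α ^ m)) (2 * lob (π / 2 - c * α ^ m / 2))
  rw [abs_mul 2, abs_two] at h3
  rw [norm_eq_abs, abs_mul, abs_of_pos (by positivity : (0:ℝ) < 2 ^ m)]
  calc 2 ^ m * |lob (c * α ^ m) + 2 * lob (π / 2 - c * α ^ m / 2)|
      ≤ 2 ^ m * (c * α ^ m * (log 2 + 1 - (log c + m * log α))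
          + 2 * (c * α ^ m / 2 * log 2)) := by
        gcongr
        linarith
    _ = c * (2 * log 2 + 1 - log c) * (2 * α) ^ m + -(c * log α) * (m * (2 * α) ^ m) := by
        rw [mul_pow]
        ring
end

section
/- Let n ≥ 1 and N ≥ 2 be integers and let M be a nonempty subset of (Fin n → Fin N). Define the generalized Sierpinski carpet K(M) ⊆ EuclideanSpace ℝ n by K(M) = { x : ∃ a : ℕ → M, ∀ j, x j = ∑_{i=0}^∞ ((a i) j : ℝ) / N^(i+1) }. Then the Hausdorff dimension of K(M) equals log |M| / log N. -/
/-!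
The coding map `φ` sends a sequence of digit vectors in `M` to a point of the carpet. Put
`m = |M|` and `s = log m / log N`, so that `N ^ s = m`. As the coordinate map from
`EuclideanSpace` to `Fin n → ℝ` is a linear equivalence, the sup norm may be used throughout.

*Upper bound.* Two sequences with the same first `k` digit vectors have images at distance at most
`N⁻ᵏ`. The carpet is thus covered by `mᵏ` sets of diameter at most `N⁻ᵏ`, and
`mᵏ (N⁻ᵏ) ^ s = 1`, so the `s`-dimensional Hausdorff measure is at most `1`.

*Lower bound* (mass distribution). Give the sequences the product of the uniform
measures on `M`. If `U` has diameter at most `N⁻ᵏ`, then in each coordinate the integers formed by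
the first `k` digits of points of `U` differ from a fixed one by at most `2`; since such an integer
determines the `k` digits, `φ⁻¹ U` lies in the union of at most `5ⁿ` cylinders of length `k`, of
measure `m⁻ᵏ` each (`measure_preimage_le`). Choosing `k` with `N⁻ᵏ⁻¹ < diam U ≤ N⁻ᵏ` bounds the
mass of `U` by `5ⁿ m (diam U) ^ s`, so the `s`-dimensional Hausdorff measure is positive.
-/

open MeasureTheory Set Filter Topology
open scoped ENNReal NNReal

namespace Sierp

/-- The integer `⌊Nᵏ · 0.d₀d₁d₂…⌋` read off the first `k` base-`N` digits
(up to the ambiguity of a tail of digits `N - 1`). -/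
def prefixNum {N : ℕ} (d : ℕ → Fin N) : ℕ → ℕ
  | 0 => 0
  | k + 1 => N * prefixNum d k + d k

lemma sum_ofDigitsTerm {N : ℕ} (hN : 2 ≤ N) (d : ℕ → Fin N) (k : ℕ) :
    ∑ i ∈ Finset.range k, Real.ofDigitsTerm d i = prefixNum d k * ((N : ℝ) ^ k)⁻¹ := by
  have hN0 : (N : ℝ) ≠ 0 := by positivity
  induction k with
  | zero => simp [prefixNum]
  | succ k ih =>
    rw [Finset.sum_range_succ, ih, Real.ofDigitsTerm, prefixNum]
    push_cast
    field_simp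
    ring

lemma digit_eq_of_prefixNum_eq {N : ℕ} {d d' : ℕ → Fin N} {k : ℕ}
    (h : prefixNum d k = prefixNum d' k) : ∀ i < k, d i = d' i := by
  induction k with
  | zero => simp
  | succ k ih =>
    have hpos : 0 < N := Fin.pos (d 0)
    simp only [prefixNum] at h
    have h1 : (d k : ℕ) = d' k := by
      have := congrArg (· % N) h
      simpa [Nat.mul_add_mod, Nat.mod_eq_of_lt (d k).2, Nat.mod_eq_of_lt (d' k).2] using this
    have h2 : prefixNum d k = prefixNum d' k := by
      rw [h1] at h
      exact Nat.eq_of_mul_eq_mul_left hpos (Nat.add_right_cancel h)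
    intro i hi
    rcases Nat.lt_succ_iff_lt_or_eq.1 hi with hi | rfl
    · exact ih h2 i hi
    · exact Fin.ext h1

lemma prefixNum_le_mul_ofDigits {N : ℕ} (hN : 2 ≤ N) (d : ℕ → Fin N) (k : ℕ) :
    (prefixNum d k : ℝ) ≤ (N : ℝ) ^ k * Real.ofDigits d ∧
      (N : ℝ) ^ k * Real.ofDigits d ≤ prefixNum d k + 1 := by
  have hN0 : (0 : ℝ) < (N : ℝ) ^ k := by positivity
  have h0 := Real.ofDigits_nonneg fun i => d (i + k)
  have h1 := Real.ofDigits_le_one fun i => d (i + k)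
  have : (N : ℝ) ^ k * Real.ofDigits d =
      prefixNum d k + Real.ofDigits fun i => d (i + k) := by
    rw [Real.ofDigits_eq_sum_add_ofDigits d k, sum_ofDigitsTerm hN]
    field_simp
  constructor <;> linarith

lemma prefixNum_mem_Icc {N : ℕ} (hN : 2 ≤ N) {d d' : ℕ → Fin N} {k : ℕ}
    (h : |Real.ofDigits d - Real.ofDigits d'| ≤ ((N : ℝ) ^ k)⁻¹) :
    (prefixNum d k : ℤ) ∈ Finset.Icc ((prefixNum d' k : ℤ) - 2) (prefixNum d' k + 2) := by
  have hN0 : (0 : ℝ) < (N : ℝ) ^ k := by positivity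
  obtain ⟨a1, a2⟩ := prefixNum_le_mul_ofDigits hN d k
  obtain ⟨b1, b2⟩ := prefixNum_le_mul_ofDigits hN d' k
  obtain ⟨c1, c2⟩ := abs_le.1 h
  have e1 := mul_le_mul_of_nonneg_left c1 hN0.le
  have e2 := mul_le_mul_of_nonneg_left c2 hN0.le
  rw [mul_neg, mul_inv_cancel₀ hN0.ne'] at e1
  rw [mul_inv_cancel₀ hN0.ne'] at e2
  rw [Finset.mem_Icc]
  constructor
  · have : (prefixNum d' k : ℝ) - 2 ≤ prefixNum d k := by linarith
    exact_mod_cast this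
  · have : (prefixNum d k : ℝ) ≤ prefixNum d' k + 2 := by linarith
    exact_mod_cast this

lemma ofReal_inv_pow {N : ℕ} (hN : 2 ≤ N) (k : ℕ) :
    ENNReal.ofReal (((N : ℝ) ^ k)⁻¹) = ((N : ℝ≥0∞)⁻¹) ^ k := by
  rw [ENNReal.ofReal_inv_of_pos (by positivity), ENNReal.ofReal_pow (by positivity),
    ENNReal.ofReal_natCast, ENNReal.inv_pow]

variable {n N : ℕ} {M : Set (Fin n → Fin N)}

/-- The coding map: the point whose coordinates have the base-`N` digits prescribed by `a`,
as a point of `Fin n → ℝ` with the sup norm. -/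
noncomputable def code (a : ℕ → M) : Fin n → ℝ :=
  fun j => Real.ofDigits fun i => (a i : Fin n → Fin N) j

lemma edist_code_le (hN : 2 ≤ N) {a b : ℕ → M} {k : ℕ} (h : ∀ i < k, a i = b i) :
    edist (code a) (code b) ≤ ((N : ℝ≥0∞)⁻¹) ^ k := by
  rw [← ofReal_inv_pow hN, edist_dist]
  refine ENNReal.ofReal_le_ofReal ((dist_pi_le_iff (by positivity)).2 fun j => ?_)
  rw [Real.dist_eq]
  exact Real.abs_ofDigits_sub_ofDigits_le fun i hi => by rw [h i hi]

lemma inv_pow_rpow {m N : ℕ} {s : ℝ} (hs : (N : ℝ≥0∞) ^ s = m) (k : ℕ) :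
    (((N : ℝ≥0∞)⁻¹) ^ k) ^ s = ((m : ℝ≥0∞)⁻¹) ^ k := by
  rw [← ENNReal.rpow_natCast, ← ENNReal.rpow_mul, mul_comm, ENNReal.rpow_mul,
    ENNReal.inv_rpow, hs, ENNReal.rpow_natCast]

lemma tendsto_inv_pow {m : ℕ} (hm : 2 ≤ m) :
    Tendsto (fun k : ℕ => ((m : ℝ≥0∞)⁻¹) ^ k) atTop (𝓝 0) := by
  apply ENNReal.tendsto_pow_atTop_nhds_zero_of_lt_one
  rw [ENNReal.inv_lt_one]
  exact_mod_cast hm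

lemma hausdorffMeasure_range_code_le [Fintype M] (hN : 2 ≤ N) (hM : M.Nonempty) {s : ℝ}
    (hs0 : 0 ≤ s) (hs : (N : ℝ≥0∞) ^ s = Fintype.card M) :
    μH[s] (range (code : (ℕ → M) → Fin n → ℝ)) ≤ 1 := by
  have : Nonempty M := hM.to_subtype
  have hm : (Fintype.card M : ℝ≥0∞) ≠ 0 :=
    Nat.cast_ne_zero.2 Fintype.card_ne_zero
  let t : ∀ k : ℕ, (Fin k → M) → Set (Fin n → ℝ) :=
    fun k w => code '' {a : ℕ → M | ∀ i : Fin k, a i = w i}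
  have ht : ∀ k w, Metric.ediam (t k w) ≤ ((N : ℝ≥0∞)⁻¹) ^ k := by
    intro k w
    refine Metric.ediam_le ?_
    rintro _ ⟨a, ha, rfl⟩ _ ⟨b, hb, rfl⟩
    exact edist_code_le hN fun i hi => (ha ⟨i, hi⟩).trans (hb ⟨i, hi⟩).symm
  refine (Measure.hausdorffMeasure_le_liminf_sum s _ (l := atTop)
    (fun k : ℕ => ((N : ℝ≥0∞)⁻¹) ^ k) (tendsto_inv_pow hN) t (.of_forall ht)
    (.of_forall fun k => ?_)).trans ?_
  · rintro _ ⟨a, rfl⟩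
    exact mem_iUnion.2 ⟨fun i => a i, a, fun _ => rfl, rfl⟩
  · refine liminf_le_of_le (by isBoundedDefault) fun b hb => ?_
    obtain ⟨k, hk⟩ := hb.exists
    refine hk.trans ?_
    calc ∑ w, Metric.ediam (t k w) ^ s
        ≤ ∑ w : Fin k → M, ((Fintype.card M : ℝ≥0∞)⁻¹) ^ k := by
          refine Finset.sum_le_sum fun w _ => ?_
          rw [← inv_pow_rpow hs]
          exact ENNReal.rpow_le_rpow (ht k w) hs0
      _ = 1 := by
          simp only [Finset.sum_const, Finset.card_univ, Fintype.card_pi, Finset.prod_const,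
            Fintype.card_fin, nsmul_eq_mul, Nat.cast_pow]
          rw [← mul_pow, ENNReal.mul_inv_cancel hm (by simp), one_pow]

/-- The Bernoulli measure on digit sequences: independent digit vectors, uniform on `M`. -/
noncomputable def bernoulli (M : Set (Fin n → Fin N)) [Fintype M] [Nonempty M] :
    Measure (ℕ → M) :=
  Measure.infinitePi fun _ => (PMF.uniformOfFintype M).toMeasure

instance [Fintype M] [Nonempty M] : IsProbabilityMeasure (bernoulli M) := by
  unfold bernoulli; infer_instance

lemma bernoulli_cylinder [Fintype M] [Nonempty M] (b : ℕ → M) (k : ℕ) :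
    bernoulli M {a | ∀ i < k, a i = b i} = ((Fintype.card M : ℝ≥0∞)⁻¹) ^ k := by
  have : {a : ℕ → M | ∀ i < k, a i = b i} =
      Set.pi (Finset.range k : Set ℕ) fun i => {b i} := by
    ext a; simp [Set.mem_pi]
  rw [this, bernoulli, Measure.infinitePi_pi _ fun i _ => measurableSet_singleton _]
  simp

/-- A set of diameter at most `N⁻ᵏ` meets the images of at most `5ⁿ` cylinders of length `k`,
since at most five strings of leading digits are possible in each coordinate. -/
lemma measure_preimage_le [Fintype M] [Nonempty M] (hN : 2 ≤ N) {k : ℕ} {U : Set (Fin n → ℝ)}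
    (hU : Metric.ediam U ≤ ((N : ℝ≥0∞)⁻¹) ^ k) :
    bernoulli M (code ⁻¹' U) ≤ 5 ^ n * ((Fintype.card M : ℝ≥0∞)⁻¹) ^ k := by
  rcases (code ⁻¹' U : Set (ℕ → M)).eq_empty_or_nonempty with he | ⟨b, hb⟩
  · simp [he]
  let p : (ℕ → M) → Fin n → ℤ := fun a j => prefixNum (fun i => (a i : Fin n → Fin N) j) k
  let Q : Finset (Fin n → ℤ) := Fintype.piFinset fun j => Finset.Icc (p b j - 2) (p b j + 2)
  have hQ : Q.card = 5 ^ n := by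
    have : ∀ x : ℤ, (x + 2 + 1 - (x - 2)).toNat = 5 := fun x => by
      rw [show x + 2 + 1 - (x - 2) = 5 by ring]; rfl
    simp [Q, Fintype.card_piFinset, this]
  have hcov : code ⁻¹' U ⊆ ⋃ q ∈ Q, {a : ℕ → M | p a = q} := by
    intro a ha
    simp only [mem_iUnion, mem_ofPred_eq, exists_prop, exists_eq_right']
    refine Fintype.mem_piFinset.2 fun j => prefixNum_mem_Icc hN ?_
    have h : edist (code a) (code b) ≤ _ :=
      (Metric.edist_le_ediam_of_mem (mem_preimage.1 ha) (mem_preimage.1 hb)).trans hU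
    rw [← ofReal_inv_pow hN, edist_dist, ENNReal.ofReal_le_ofReal_iff (by positivity)] at h
    exact (dist_le_pi_dist (code a) (code b) j).trans h
  have hcyl : ∀ q, bernoulli M {a : ℕ → M | p a = q} ≤ ((Fintype.card M : ℝ≥0∞)⁻¹) ^ k := by
    intro q
    rcases {a : ℕ → M | p a = q}.eq_empty_or_nonempty with he | ⟨c, hc⟩
    · simp [he]
    · rw [← bernoulli_cylinder c k]
      refine measure_mono fun a ha i hi => Subtype.ext (funext fun j => ?_)
      have h : p a j = p c j := congrFun (Eq.trans ha (Eq.symm hc)) j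
      exact digit_eq_of_prefixNum_eq (Int.natCast_inj.1 h) i hi
  calc bernoulli M (code ⁻¹' U)
      ≤ ∑ q ∈ Q, bernoulli M {a : ℕ → M | p a = q} :=
        (measure_mono hcov).trans (measure_biUnion_finset_le _ _)
    _ ≤ ∑ q ∈ Q, ((Fintype.card M : ℝ≥0∞)⁻¹) ^ k := Finset.sum_le_sum fun q _ => hcyl q
    _ = _ := by simp [hQ]

lemma measure_preimage_le_ediam_rpow [Fintype M] [Nonempty M] (hN : 2 ≤ N)
    (hm : 2 ≤ Fintype.card M) {s : ℝ} (hs0 : 0 ≤ s) (hs : (N : ℝ≥0∞) ^ s = Fintype.card M)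
    {U : Set (Fin n → ℝ)} (hU : Metric.ediam U ≤ 1) :
    bernoulli M (code ⁻¹' U) ≤ (5 ^ n * Fintype.card M) * Metric.ediam U ^ s := by
  have hm0 : (Fintype.card M : ℝ≥0∞) ≠ 0 :=
    Nat.cast_ne_zero.2 Fintype.card_ne_zero
  rcases eq_or_ne (Metric.ediam U) 0 with h0 | h0
  · -- at diameter zero the estimate holds for every `k`, so the mass vanishes
    have : Tendsto (fun k : ℕ => 5 ^ n * ((Fintype.card M : ℝ≥0∞)⁻¹) ^ k) atTop (𝓝 0) := by
      simpa using ENNReal.Tendsto.const_mul (tendsto_inv_pow hm)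
        (Or.inr (by finiteness : (5 : ℝ≥0∞) ^ n ≠ ∞))
    have h := ge_of_tendsto' this fun k =>
      measure_preimage_le (M := M) hN (k := k) (U := U) (by simp [h0])
    exact h.trans zero_le
  · have hfin : Metric.ediam U ≠ ∞ := ne_top_of_le_ne_top ENNReal.one_ne_top hU
    have hN1 : (1 : ℝ) < N := by exact_mod_cast hN
    obtain ⟨k, hk1, hk2⟩ := exists_nat_pow_near_of_lt_one (ENNReal.toReal_pos h0 hfin)
      (ENNReal.toReal_le_of_le_ofReal zero_le_one (by simpa using hU))
      (inv_pos.2 (zero_lt_one.trans hN1)) (inv_lt_one_of_one_lt₀ hN1)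
    rw [inv_pow] at hk1 hk2
    have h2 : Metric.ediam U ≤ ((N : ℝ≥0∞)⁻¹) ^ k := by
      rw [← ofReal_inv_pow hN]
      exact (ENNReal.le_ofReal_iff_toReal_le hfin (by positivity)).2 hk2
    have h1 : ((N : ℝ≥0∞)⁻¹) ^ (k + 1) ≤ Metric.ediam U := by
      rw [← ofReal_inv_pow hN]
      exact ENNReal.ofReal_le_of_le_toReal hk1.le
    calc bernoulli M (code ⁻¹' U)
        ≤ 5 ^ n * ((Fintype.card M : ℝ≥0∞)⁻¹) ^ k := measure_preimage_le hN h2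
      _ = (5 ^ n * Fintype.card M) * ((Fintype.card M : ℝ≥0∞)⁻¹) ^ (k + 1) := by
          rw [pow_succ', mul_assoc, ← mul_assoc (Fintype.card M : ℝ≥0∞),
            ENNReal.mul_inv_cancel hm0 (by simp), one_mul]
      _ ≤ _ := by
          rw [← inv_pow_rpow hs]
          gcongr

lemma hausdorffMeasure_range_code_ne_zero [Fintype M] [Nonempty M] (hN : 2 ≤ N)
    (hm : 2 ≤ Fintype.card M) {s : ℝ} (hs0 : 0 ≤ s) (hs : (N : ℝ≥0∞) ^ s = Fintype.card M) :
    μH[s] (range (code : (ℕ → M) → Fin n → ℝ)) ≠ 0 := by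
  set C : ℝ≥0∞ := 5 ^ n * Fintype.card M with hC
  have hC0 : C ≠ 0 :=
    mul_ne_zero (by simp) (Nat.cast_ne_zero.2 Fintype.card_ne_zero)
  have hCt : C ≠ ∞ := by rw [hC]; finiteness
  -- Comparing outer measures makes the measurability of the coding map irrelevant.
  let μ : OuterMeasure (Fin n → ℝ) := C⁻¹ • OuterMeasure.map code (bernoulli M).toOuterMeasure
  have hμ : μ ≤ OuterMeasure.mkMetric fun r => r ^ s := by
    refine OuterMeasure.le_mkMetric _ μ 1 one_pos fun U hU => ?_
    calc μ U = C⁻¹ * bernoulli M (code ⁻¹' U) := rfl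
      _ ≤ C⁻¹ * (C * Metric.ediam U ^ s) := by
          gcongr
          exact measure_preimage_le_ediam_rpow hN hm hs0 hs hU
      _ = Metric.ediam U ^ s := by
          rw [← mul_assoc, ENNReal.inv_mul_cancel hC0 hCt, one_mul]
  have h := hμ (range (code : (ℕ → M) → Fin n → ℝ))
  rw [OuterMeasure.coe_mkMetric] at h
  have hval : μ (range (code : (ℕ → M) → Fin n → ℝ)) = C⁻¹ := by
    change C⁻¹ * bernoulli M (code ⁻¹' range code) = C⁻¹
    simp
  rw [hval] at h
  exact (lt_of_lt_of_le (ENNReal.inv_pos.2 hCt) h).ne'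

lemma dimH_range_code [Fintype M] (hN : 2 ≤ N) (hM : M.Nonempty) :
    dimH (range (code : (ℕ → M) → Fin n → ℝ)) =
      ENNReal.ofReal (Real.log (Fintype.card M) / Real.log N) := by
  have : Nonempty M := hM.to_subtype
  have hN1 : (1 : ℝ) < N := by exact_mod_cast hN
  have hm1 : (1 : ℝ) ≤ Fintype.card M := by exact_mod_cast Fintype.card_pos
  set s : ℝ := Real.log (Fintype.card M) / Real.log N with hsdef
  have hs0 : 0 ≤ s := div_nonneg (Real.log_nonneg hm1) (Real.log_nonneg hN1.le)
  have hs : (N : ℝ≥0∞) ^ s = Fintype.card M := by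
    have h : (N : ℝ) ^ s = Fintype.card M :=
      Real.rpow_logb (zero_lt_one.trans hN1) hN1.ne' (zero_lt_one.trans_le hm1)
    rw [← ENNReal.ofReal_natCast N, ENNReal.ofReal_rpow_of_pos (zero_lt_one.trans hN1), h,
      ENNReal.ofReal_natCast]
  have hcoe : ((s.toNNReal : ℝ≥0) : ℝ) = s := Real.coe_toNNReal s hs0
  apply le_antisymm
  · refine dimH_le_of_hausdorffMeasure_ne_top (d := s.toNNReal) ?_
    rw [hcoe]
    exact ne_top_of_le_ne_top ENNReal.one_ne_top (hausdorffMeasure_range_code_le hN hM hs0 hs)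
  · rcases (Nat.succ_le_of_lt (Fintype.card_pos (α := M))).eq_or_lt with hm | hm
    · -- a single digit vector: `s = 0` and there is nothing to prove
      simp [hsdef, ← hm]
    · refine le_dimH_of_hausdorffMeasure_ne_zero (d := s.toNNReal) ?_
      rw [hcoe]
      exact hausdorffMeasure_range_code_ne_zero hN hm hs0 hs

end Sierp

/-- Theorem `sierpdim`: the generalized Sierpinski carpet `K(M)` determined by a nonempty
set `M ⊆ {0,…,N-1}ⁿ` of digit vectors (points of `[0,1]ⁿ` all of whose base-`N` digit
vectors lie in `M`) has Hausdorff dimension `log|M| / log N`. -/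
theorem sierpdim (n N : ℕ) (hn : 1 ≤ n) (hN : 2 ≤ N)
    (M : Set (Fin n → Fin N)) (hM : M.Nonempty) :
    dimH {x : EuclideanSpace ℝ (Fin n) |
        ∃ a : ℕ → M, ∀ j : Fin n,
          x j = ∑' i : ℕ, (((a i : Fin n → Fin N) j : ℕ) : ℝ) / (N : ℝ) ^ (i + 1)}
      = ENNReal.ofReal (Real.log (Nat.card M) / Real.log N) := by
  classical
  have : Fintype M := Fintype.ofFinite M
  rw [Nat.card_eq_fintype_card, ← Sierp.dimH_range_code hN hM,
    ← (EuclideanSpace.equiv (Fin n) ℝ).dimH_preimage]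
  congr 1
  ext x
  simp only [mem_ofPred_eq, mem_preimage, mem_range, funext_iff]
  refine exists_congr fun a => forall_congr' fun j => ?_
  rw [eq_comm]
  simp [Sierp.code, Real.ofDigits, Real.ofDigitsTerm, div_eq_mul_inv]
end
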